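/- Let n, m ≥ 4 be integers and let G = P_n □ P_m be the grid. If a, b, k, l are integers such that a ≥ 3, b ≥ 3, 0 ≤ k ≤ a−2 ≤ n−3 and 0 ≤ l ≤ b−2 ≤ m−3, then ab − (k+l) ∈ S_SC(G). -/

import Mathlib

/-!  Common definitions: oriented graphs, geodesic convexity, convexity number,
strong convexity spectrum, and grid graphs. -/

variable {V : Type*}

/-- A directed walk of length `k` from `u` to `v` along the arc relation `A`,
encoded by the function `f` listing its vertices. -/
def IsDirWalk (A : V → V → Prop) (k : ℕ) (f : ℕ → V) (u v : V) : Prop :=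
  f 0 = u ∧ f k = v ∧ ∀ i, i < k → A (f i) (f (i + 1))

/-- There is a directed walk from `u` to `v`. -/
def DirReachable (A : V → V → Prop) (u v : V) : Prop :=
  ∃ k f, IsDirWalk A k f u v

/-- A digraph (given by its arc relation) is strongly connected. -/
def StrongConnected (A : V → V → Prop) : Prop :=
  ∀ u v : V, DirReachable A u v

/-- A `uv`-geodesic: a directed walk from `u` to `v` of minimum possible length
(such a walk is automatically a directed path). -/
def IsGeodesic (A : V → V → Prop) (k : ℕ) (f : ℕ → V) (u v : V) : Prop :=
  IsDirWalk A k f u v ∧ ∀ k' f', IsDirWalk A k' f' u v → k ≤ k'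

/-- A nonempty vertex set `C` is convex if every vertex lying on a geodesic
between two vertices of `C` (in either direction) belongs to `C`. -/
def DConvex (A : V → V → Prop) (C : Set V) : Prop :=
  C.Nonempty ∧ ∀ u ∈ C, ∀ v ∈ C, ∀ k f, IsGeodesic A k f u v → ∀ i ≤ k, f i ∈ C

/-- `A` is an orientation of the simple graph `G`: every arc is along an edge,
every edge gets an arc, and no edge gets both directions. -/
def IsOrientation (G : SimpleGraph V) (A : V → V → Prop) : Prop :=
  (∀ x y, A x y → G.Adj x y) ∧ (∀ x y, G.Adj x y → A x y ∨ A y x) ∧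
    (∀ x y, A x y → ¬ A y x)

/-- The convexity number of a digraph: the maximum cardinality of a proper convex set. -/
noncomputable def convexityNumber [Fintype V] (A : V → V → Prop) : ℕ :=
  sSup {k | ∃ C : Set V, DConvex A C ∧ C ≠ Set.univ ∧ C.ncard = k}

/-- The strong convexity spectrum of a graph: the set of convexity numbers of
its strongly connected orientations. -/
def strongConvexitySpectrum [Fintype V] (G : SimpleGraph V) : Set ℕ :=
  {k | ∃ A : V → V → Prop, IsOrientation G A ∧ StrongConnected A ∧ convexityNumber A = k}

/-- The grid graph `P_n □ P_m`. -/
def gridGraph (n m : ℕ) : SimpleGraph (Fin n × Fin m) :=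
  (SimpleGraph.pathGraph n).boxProd (SimpleGraph.pathGraph m)

/-! ## Walks as an inductive relation -/

/-- `Wk B k u v`: there is a directed walk of length `k` from `u` to `v`. -/
inductive Wk {α : Type*} (B : α → α → Prop) : ℕ → α → α → Prop
  | nil (u : α) : Wk B 0 u u
  | cons {u w v : α} {k : ℕ} : B u w → Wk B k w v → Wk B (k + 1) u v

section Walks
variable {α : Type*} {B : α → α → Prop}

theorem Wk.trans {i j : ℕ} {u w v : α} (h1 : Wk B i u w) (h2 : Wk B j w v) :
    Wk B (i + j) u v := by
  induction h1 with
  | nil u => simpa using h2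
  | @cons u w' v' k h _ ih =>
    have := Wk.cons h (ih h2)
    rwa [show k + 1 + j = k + j + 1 by omega]

theorem Wk.one {u v : α} (h : B u v) : Wk B 1 u v := Wk.cons h (Wk.nil v)

theorem Wk.snoc {k : ℕ} {u w v : α} (h1 : Wk B k u w) (h : B w v) : Wk B (k + 1) u v :=
  h1.trans (Wk.one h)

theorem Wk.cast {i j : ℕ} {u v : α} (h : Wk B i u v) (e : i = j) : Wk B j u v := e ▸ h

theorem Wk.eq_zero {u v : α} (h : Wk B 0 u v) : u = v := by
  cases h; rfl

theorem Wk.inv_succ {k : ℕ} {u v : α} (h : Wk B (k + 1) u v) : ∃ w, B u w ∧ Wk B k w v := by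
  cases h with
  | cons h1 h2 => exact ⟨_, h1, h2⟩

theorem Wk.inv_snoc {k : ℕ} {u v : α} (h : Wk B (k + 1) u v) : ∃ w, Wk B k u w ∧ B w v := by
  induction k generalizing u with
  | zero =>
    obtain ⟨w, h1, h2⟩ := h.inv_succ
    obtain rfl := h2.eq_zero
    exact ⟨u, Wk.nil u, h1⟩
  | succ k ih =>
    obtain ⟨w, h1, h2⟩ := h.inv_succ
    obtain ⟨z, h3, h4⟩ := ih h2
    exact ⟨z, Wk.cons h1 h3, h4⟩

theorem wk_iff {k : ℕ} {u v : α} : Wk B k u v ↔ ∃ f, IsDirWalk B k f u v := by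
  constructor
  · intro h
    induction h with
    | nil u => exact ⟨fun _ => u, rfl, rfl, fun i hi => absurd hi (by omega)⟩
    | @cons u w v k h _ ih =>
      obtain ⟨f, h0, hk, hf⟩ := ih
      refine ⟨fun i => match i with | 0 => u | i + 1 => f i, rfl, hk, ?_⟩
      intro i hi
      cases i with
      | zero => simpa [h0] using h
      | succ i => exact hf i (by omega)
  · rintro ⟨f, h0, hk, hf⟩
    subst h0; subst hk
    induction k with
    | zero => exact Wk.nil _
    | succ k ih => exact (ih fun i hi => hf i (by omega)).snoc (hf k (by omega))

theorem wk_sub {k : ℕ} {u v : α} {f : ℕ → α} (h : IsDirWalk B k f u v) {i : ℕ} (hi : i ≤ k) :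
    Wk B i u (f i) ∧ Wk B (k - i) (f i) v := by
  obtain ⟨h0, hk, hf⟩ := h
  constructor
  · exact wk_iff.2 ⟨f, h0, rfl, fun j hj => hf j (by omega)⟩
  · refine wk_iff.2 ⟨fun j => f (i + j), rfl, ?_, fun j hj => ?_⟩
    · simp only; rw [show i + (k - i) = k by omega, hk]
    · exact hf (i + j) (by omega)

theorem Wk.potential {φ : α → ℕ} (hφ : ∀ u w, B u w → φ u ≤ φ w + 1) {k : ℕ} {u v : α}
    (h : Wk B k u v) : φ u ≤ φ v + k := by
  induction h with
  | nil u => omega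
  | cons h _ ih => have := hφ _ _ h; omega

/-- Convexity formulated with `Wk`. -/
def Cv (B : α → α → Prop) (S : Set α) : Prop :=
  ∀ u ∈ S, ∀ v ∈ S, ∀ w i j, Wk B i u w → Wk B j w v → (∀ k, Wk B k u v → i + j ≤ k) → w ∈ S

theorem dconvex_iff {S : Set α} : DConvex B S ↔ S.Nonempty ∧ Cv B S := by
  unfold DConvex Cv
  refine and_congr Iff.rfl ?_
  constructor
  · intro h u hu v hv w i j h1 h2 hmin
    obtain ⟨f, f0, fi, hf⟩ := wk_iff.1 h1
    obtain ⟨g, g0, gj, hg⟩ := wk_iff.1 h2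
    have := h u hu v hv (i + j) (fun t => if t ≤ i then f t else g (t - i)) ⟨⟨?_, ?_, ?_⟩, ?_⟩ i
      (by omega)
    · simpa [fi] using this
    · simpa using f0
    · by_cases hj : j = 0
      · subst hj; simp [fi, ← g0, gj]
      · simp [hj, gj]
    · intro t ht
      simp only
      by_cases h1 : t + 1 ≤ i
      · rw [if_pos (by omega), if_pos h1]; exact hf t (by omega)
      · by_cases h2 : t = i
        · subst h2
          rw [if_pos le_rfl, if_neg h1, fi, ← g0, show t + 1 - t = 0 + 1 by omega]
          exact hg 0 (by omega)
        · rw [if_neg (by omega), if_neg h1, show t + 1 - i = (t - i) + 1 by omega]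
          exact hg _ (by omega)
    · intro k' f' hk'
      exact hmin k' (wk_iff.2 ⟨f', hk'⟩)
  · intro h u hu v hv k f hf i hi
    obtain ⟨h1, h2⟩ := wk_sub hf.1 hi
    refine h u hu v hv _ _ _ h1 h2 fun k' hk' => ?_
    obtain ⟨f', hf'⟩ := wk_iff.1 hk'
    have := hf.2 k' f' hf'
    omega

theorem exists_geod {u v : α} (h : ∃ k, Wk B k u v) :
    ∃ k, Wk B k u v ∧ ∀ k', Wk B k' u v → k ≤ k' := by
  classical
  exact ⟨Nat.find h, Nat.find_spec h, fun k' hk' => Nat.find_min' h hk'⟩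

theorem Cv.out_nbr {S : Set α} (hS : Cv B S) {u v : α} (hu : u ∈ S) (hv : v ∈ S) (hne : u ≠ v)
    (hr : ∃ k, Wk B k u v) : ∃ w ∈ S, B u w := by
  obtain ⟨k, hk, hmin⟩ := exists_geod hr
  cases k with
  | zero => exact absurd hk.eq_zero hne
  | succ k =>
    obtain ⟨w, h1, h2⟩ := hk.inv_succ
    exact ⟨w, hS u hu v hv w 1 k (Wk.one h1) h2 fun k' hk' => by have := hmin k' hk'; omega, h1⟩

theorem Cv.in_nbr {S : Set α} (hS : Cv B S) {u v : α} (hu : u ∈ S) (hv : v ∈ S) (hne : u ≠ v)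
    (hr : ∃ k, Wk B k u v) : ∃ w ∈ S, B w v := by
  obtain ⟨k, hk, hmin⟩ := exists_geod hr
  cases k with
  | zero => exact absurd hk.eq_zero hne
  | succ k =>
    obtain ⟨w, h1, h2⟩ := hk.inv_snoc
    exact ⟨w, hS u hu v hv w k 1 h1 (Wk.one h2) hmin, h2⟩

/-- Walks from outside `C` that end when `C` is first reached. -/
inductive OW (B : α → α → Prop) (C : Set α) : ℕ → α → α → Prop
  | one {u q : α} : u ∉ C → q ∈ C → B u q → OW B C 1 u q
  | cons {u w q : α} {k : ℕ} : u ∉ C → B u w → OW B C k w q → OW B C (k + 1) u q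

theorem OW.nmem {C : Set α} {k : ℕ} {u q : α} (h : OW B C k u q) : u ∉ C := by
  cases h <;> assumption

theorem OW.entry {C : Set α} {k : ℕ} {u q : α} (h : OW B C k u q) :
    q ∈ C ∧ ∃ u', u' ∉ C ∧ B u' q := by
  induction h with
  | one h1 h2 h3 => exact ⟨h2, _, h1, h3⟩
  | cons _ _ _ ih => exact ih

theorem OW.potential {C : Set α} {φ : α → ℕ} (hφ : ∀ u w, u ∉ C → B u w → φ u ≤ φ w + 1)
    {k : ℕ} {u q : α} (h : OW B C k u q) : φ u ≤ φ q + k := by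
  induction h with
  | one h1 h2 h3 => exact hφ _ _ h1 h3
  | cons h1 h2 _ ih => have := hφ _ _ h1 h2; omega

theorem exists_OW {C : Set α} {j : ℕ} {w v : α} (h : Wk B j w v) (hw : w ∉ C) (hv : v ∈ C) :
    ∃ j1 j2 q, OW B C j1 w q ∧ Wk B j2 q v ∧ j1 + j2 = j := by
  induction h with
  | nil u => exact absurd hv hw
  | @cons u w' v k h1 h2 ih =>
    by_cases hw' : w' ∈ C
    · exact ⟨1, k, w', OW.one hw hw' h1, h2, by omega⟩
    · obtain ⟨j1, j2, q, h3, h4, h5⟩ := ih hw' hv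
      exact ⟨j1 + 1, j2, q, OW.cons hw h1 h3, h4, by omega⟩

theorem splice {C : Set α}
    (hyp : ∀ p ∈ C, ∀ u k q, B p u → OW B C k u q → ∃ j ≤ k, Wk B j p q)
    {i : ℕ} {u w : α} (h : Wk B i u w) {k : ℕ} {q : α} (ho : OW B C k w q) :
    OW B C (i + k) u q ∨ ∃ j < i + k, Wk B j u q := by
  induction h with
  | nil u => left; simpa using ho
  | @cons u w' v i h1 h2 ih =>
    rcases ih ho with h | ⟨j, hj, h⟩
    · by_cases hu : u ∈ C
      · obtain ⟨j, hj, h'⟩ := hyp u hu w' _ q h1 h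
        exact Or.inr ⟨j, by omega, h'⟩
      · left
        rw [show i + 1 + k = i + k + 1 by omega]
        exact OW.cons hu h1 h
    · exact Or.inr ⟨j + 1, by omega, Wk.cons h1 h⟩

theorem cv_of_detour {C : Set α}
    (hyp : ∀ p ∈ C, ∀ u, u ∉ C → B p u → ∀ q ∈ C, ∀ u', u' ∉ C → B u' q →
      ∃ φ : α → ℕ, (∀ x w, x ∉ C → B x w → φ x ≤ φ w + 1) ∧ ∃ j, Wk B j p q ∧ φ q + j ≤ φ u) :
    Cv B C := by
  have hyp' : ∀ p ∈ C, ∀ u k q, B p u → OW B C k u q → ∃ j ≤ k, Wk B j p q := by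
    intro p hp u k q hpu ho
    obtain ⟨hq, u', hu', hq'⟩ := ho.entry
    obtain ⟨φ, hφ, j, hj, hle⟩ := hyp p hp u ho.nmem hpu q hq u' hu' hq'
    have := ho.potential hφ
    exact ⟨j, by omega, hj⟩
  intro u hu v hv w i j h1 h2 hmin
  by_contra hw
  obtain ⟨j1, j2, q, h3, h4, h5⟩ := exists_OW h2 hw hv
  rcases splice hyp' h1 h3 with h | ⟨t, ht, h⟩
  · exact h.nmem hu
  · have := hmin _ (h.trans h4)
    omega

end Walks

/-! ## Grid digraphs on `ℕ × ℕ` -/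

/-- Arcs of the oriented `n × m` grid: `H x y` says that the edge `(x,y)-(x,y+1)` points to the
right, `V x y` that the edge `(x,y)-(x+1,y)` points upwards. -/
def nArc (n m : ℕ) (H V : ℕ → ℕ → Prop) (p q : ℕ × ℕ) : Prop :=
  (p.1 < n ∧ p.2 < m ∧ q.1 < n ∧ q.2 < m) ∧
  ((p.1 = q.1 ∧ p.2 + 1 = q.2 ∧ H p.1 p.2) ∨ (p.1 = q.1 ∧ q.2 + 1 = p.2 ∧ ¬ H q.1 q.2) ∨
   (p.2 = q.2 ∧ p.1 + 1 = q.1 ∧ V p.1 p.2) ∨ (p.2 = q.2 ∧ q.1 + 1 = p.1 ∧ ¬ V q.1 q.2))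

/-- The embedding of the vertex set of the grid into `ℕ × ℕ`. -/
def emb (n m : ℕ) (p : Fin n × Fin m) : ℕ × ℕ := (p.1.val, p.2.val)

theorem emb_inj (n m : ℕ) : Function.Injective (emb n m) := by
  rintro ⟨a, b⟩ ⟨c, d⟩ h
  simp only [emb, Prod.mk.injEq] at h
  exact Prod.ext (Fin.ext h.1) (Fin.ext h.2)

theorem orient_nArc (n m : ℕ) (H V : ℕ → ℕ → Prop) :
    IsOrientation (gridGraph n m) (fun p q => nArc n m H V (emb n m p) (emb n m q)) := by
  have hadj : ∀ p q : Fin n × Fin m, (gridGraph n m).Adj p q ↔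
      ((p.1.val = q.1.val ∧ (p.2.val + 1 = q.2.val ∨ q.2.val + 1 = p.2.val)) ∨
       (p.2.val = q.2.val ∧ (p.1.val + 1 = q.1.val ∨ q.1.val + 1 = p.1.val))) := by
    intro p q
    simp only [gridGraph, SimpleGraph.boxProd_adj, SimpleGraph.pathGraph_adj, Fin.ext_iff]
    tauto
  have hb : ∀ p : Fin n × Fin m, p.1.val < n ∧ p.2.val < m := fun p => ⟨p.1.2, p.2.2⟩
  refine ⟨?_, ?_, ?_⟩
  · intro p q h
    rw [hadj]
    obtain ⟨_, h⟩ := h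
    simp only [emb] at h
    tauto
  · intro p q h
    rw [hadj] at h
    have h1 := hb p
    have h2 := hb q
    simp only [nArc, emb]
    rcases h with ⟨e, h | h⟩ | ⟨e, h | h⟩
    · by_cases hh : H p.1 p.2
      · exact Or.inl ⟨⟨h1.1, h1.2, h2.1, h2.2⟩, by tauto⟩
      · exact Or.inr ⟨⟨h2.1, h2.2, h1.1, h1.2⟩, by have := e.symm; tauto⟩
    · by_cases hh : H q.1 q.2
      · exact Or.inr ⟨⟨h2.1, h2.2, h1.1, h1.2⟩, by have := e.symm; tauto⟩
      · exact Or.inl ⟨⟨h1.1, h1.2, h2.1, h2.2⟩, by tauto⟩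
    · by_cases hh : V p.1 p.2
      · exact Or.inl ⟨⟨h1.1, h1.2, h2.1, h2.2⟩, by tauto⟩
      · exact Or.inr ⟨⟨h2.1, h2.2, h1.1, h1.2⟩, by have := e.symm; tauto⟩
    · by_cases hh : V q.1 q.2
      · exact Or.inr ⟨⟨h2.1, h2.2, h1.1, h1.2⟩, by have := e.symm; tauto⟩
      · exact Or.inl ⟨⟨h1.1, h1.2, h2.1, h2.2⟩, by tauto⟩
  · rintro p q ⟨_, h1⟩ ⟨_, h2⟩
    rcases h1 with ⟨_, _, h⟩ | ⟨_, _, h⟩ | ⟨_, _, h⟩ | ⟨_, _, h⟩ <;>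
    rcases h2 with ⟨_, _, h'⟩ | ⟨_, _, h'⟩ | ⟨_, _, h'⟩ | ⟨_, _, h'⟩ <;>
    first
    | omega
    | exact h' h
    | exact h h'

theorem wk_emb {n m : ℕ} {H V : ℕ → ℕ → Prop} {k : ℕ} {p q : ℕ × ℕ}
    (h : Wk (nArc n m H V) k p q) : ∀ (p' q' : Fin n × Fin m), emb n m p' = p → emb n m q' = q →
    Wk (fun p q => nArc n m H V (emb n m p) (emb n m q)) k p' q' := by
  induction h with
  | nil u =>
    intro p' q' h1 h2
    obtain rfl := emb_inj n m (h1.trans h2.symm)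
    exact Wk.nil _
  | @cons u w v k h _ ih =>
    intro p' q' h1 h2
    have hw := h.1
    exact Wk.cons (w := (⟨w.1, hw.2.2.1⟩, ⟨w.2, hw.2.2.2⟩)) (by rw [h1]; exact h) (ih _ _ rfl h2)

theorem emb_wk {n m : ℕ} {H V : ℕ → ℕ → Prop} {k : ℕ} {p' q' : Fin n × Fin m}
    (h : Wk (fun p q => nArc n m H V (emb n m p) (emb n m q)) k p' q') :
    Wk (nArc n m H V) k (emb n m p') (emb n m q') := by
  induction h with
  | nil u => exact Wk.nil _
  | cons h _ ih => exact Wk.cons h ih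

/-- The box of grid points. -/
def Box (n m : ℕ) : Set (ℕ × ℕ) := {p | p.1 < n ∧ p.2 < m}

theorem Wk.box {n m : ℕ} {H V : ℕ → ℕ → Prop} {k : ℕ} {p q : ℕ × ℕ}
    (h : Wk (nArc n m H V) k p q) (hp : p ∈ Box n m) : q ∈ Box n m := by
  induction h with
  | nil u => exact hp
  | cons h _ ih => exact ih ⟨h.1.2.2.1, h.1.2.2.2⟩

theorem spectrum_of (n m : ℕ) (H V : ℕ → ℕ → Prop) (C : Finset (ℕ × ℕ))
    (hbox : ∀ p ∈ C, p ∈ Box n m) (hne : C.Nonempty) (hprop : ∃ p ∈ Box n m, p ∉ C)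
    (hstr : ∀ u ∈ Box n m, ∀ v ∈ Box n m, ∃ k, Wk (nArc n m H V) k u v)
    (hC : Cv (nArc n m H V) (C : Set (ℕ × ℕ)))
    (hmax : ∀ S : Set (ℕ × ℕ), S ⊆ Box n m → Cv (nArc n m H V) S → S.Nonempty →
      (∀ p ∈ Box n m, p ∈ S) ∨ S.ncard ≤ C.card) :
    C.card ∈ strongConvexitySpectrum (gridGraph n m) := by
  have hemb : ∀ p ∈ Box n m, ∃ p', emb n m p' = p := fun p hp => ⟨(⟨p.1, hp.1⟩, ⟨p.2, hp.2⟩), rfl⟩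
  have hembox : ∀ p', emb n m p' ∈ Box n m := fun p => ⟨p.1.2, p.2.2⟩
  refine ⟨_, orient_nArc n m H V, ?_, ?_⟩
  · intro u v
    obtain ⟨k, hk⟩ := hstr _ (hembox u) _ (hembox v)
    exact ⟨k, wk_iff.1 (wk_emb hk u v rfl rfl)⟩
  · have himg : emb n m '' (emb n m ⁻¹' (C : Set (ℕ × ℕ))) = C := by
      apply Set.image_preimage_eq_of_subset
      intro p hp
      exact hemb p (hbox p hp)
    apply IsGreatest.csSup_eq
    constructor
    · refine ⟨emb n m ⁻¹' C, ?_, ?_, ?_⟩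
      · rw [dconvex_iff]
        constructor
        · obtain ⟨p, hp⟩ := hne
          obtain ⟨p', rfl⟩ := hemb p (hbox p hp)
          exact ⟨p', hp⟩
        · intro u hu v hv w i j h1 h2 hmin
          exact hC _ hu _ hv _ i j (emb_wk h1) (emb_wk h2)
            fun k hk => hmin k (wk_emb hk u v rfl rfl)
      · obtain ⟨p, hp, hpC⟩ := hprop
        obtain ⟨p', rfl⟩ := hemb p hp
        intro h
        have : p' ∈ emb n m ⁻¹' (C : Set (ℕ × ℕ)) := h ▸ Set.mem_univ _
        exact hpC this
      · rw [← Set.ncard_image_of_injective _ (emb_inj n m), himg, Set.ncard_coe_finset]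
    · rintro k ⟨S, hS, hSne, rfl⟩
      rw [dconvex_iff] at hS
      rw [← Set.ncard_image_of_injective _ (emb_inj n m)]
      have hsub : emb n m '' S ⊆ Box n m := by
        rintro _ ⟨p, _, rfl⟩
        exact hembox p
      have hcv : Cv (nArc n m H V) (emb n m '' S) := by
        rintro _ ⟨u, hu, rfl⟩ _ ⟨v, hv, rfl⟩ w i j h1 h2 hmin
        obtain ⟨w', rfl⟩ := hemb w (h1.box (hembox u))
        exact ⟨w', hS.2 u hu v hv w' i j (wk_emb h1 _ _ rfl rfl) (wk_emb h2 _ _ rfl rfl)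
          fun k hk => hmin k (emb_wk hk), rfl⟩
      rcases hmax (emb n m '' S) hsub hcv (hS.1.image _) with h | h
      · exfalso
        apply hSne
        ext p
        simp only [Set.mem_univ, iff_true]
        obtain ⟨p', hp', e⟩ := h _ (hembox p)
        exact emb_inj n m e ▸ hp'
      · exact h

/-! ## Tools for grid digraphs -/

section GridTools

/-- Manhattan distance. -/
def man (p q : ℕ × ℕ) : ℕ := (p.1 - q.1) + (q.1 - p.1) + ((p.2 - q.2) + (q.2 - p.2))

theorem nArc_man {n m : ℕ} {H V : ℕ → ℕ → Prop} {u w : ℕ × ℕ} (h : nArc n m H V u w)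
    (q : ℕ × ℕ) : man u q ≤ man w q + 1 := by
  obtain ⟨_, h⟩ := h
  unfold man
  rcases h with ⟨h1, h2, _⟩ | ⟨h1, h2, _⟩ | ⟨h1, h2, _⟩ | ⟨h1, h2, _⟩ <;> omega

theorem wk_man {n m : ℕ} {H V : ℕ → ℕ → Prop} {u w : ℕ × ℕ} {k : ℕ}
    (h : Wk (nArc n m H V) k u w) : man u w ≤ k := by
  have := h.potential (φ := fun p => man p w) fun a b hab => nArc_man hab w
  have h0 : man w w = 0 := by unfold man; omega
  simp only [h0] at this
  omega

theorem Cv.pull {n m : ℕ} {H V : ℕ → ℕ → Prop} {S : Set (ℕ × ℕ)} (hS : Cv (nArc n m H V) S)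
    {u v w : ℕ × ℕ} {i j : ℕ} (hu : u ∈ S) (hv : v ∈ S) (h1 : Wk (nArc n m H V) i u w)
    (h2 : Wk (nArc n m H V) j w v) (hle : i + j ≤ man u v) : w ∈ S :=
  hS u hu v hv w i j h1 h2 fun _ hk => hle.trans (wk_man hk)

theorem wk_parity {n m : ℕ} {H V : ℕ → ℕ → Prop} {u w : ℕ × ℕ} {k : ℕ}
    (h : Wk (nArc n m H V) k u w) : (u.1 + u.2 + k + w.1 + w.2) % 2 = 0 := by
  induction h with
  | nil u => omega
  | cons h _ ih =>
    obtain ⟨_, h⟩ := h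
    rcases h with ⟨h1, h2, _⟩ | ⟨h1, h2, _⟩ | ⟨h1, h2, _⟩ | ⟨h1, h2, _⟩ <;> omega

theorem nArc_asymm {n m : ℕ} {H V : ℕ → ℕ → Prop} {p q : ℕ × ℕ} (h1 : nArc n m H V p q) :
    ¬ nArc n m H V q p := by
  rintro ⟨_, h2⟩
  obtain ⟨_, h1⟩ := h1
  rcases h1 with ⟨_, _, h⟩ | ⟨_, _, h⟩ | ⟨_, _, h⟩ | ⟨_, _, h⟩ <;>
  rcases h2 with ⟨_, _, h'⟩ | ⟨_, _, h'⟩ | ⟨_, _, h'⟩ | ⟨_, _, h'⟩ <;>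
  first
  | omega
  | exact h' h
  | exact h h'

variable {n m : ℕ} {H V : ℕ → ℕ → Prop}

theorem arc_r {x y : ℕ} (hx : x < n) (hy : y + 1 < m) (h : H x y) :
    nArc n m H V (x, y) (x, y + 1) :=
  ⟨⟨hx, by simp only; omega, hx, hy⟩, Or.inl ⟨rfl, rfl, h⟩⟩

theorem arc_l {x y : ℕ} (hx : x < n) (hy : y + 1 < m) (h : ¬ H x y) :
    nArc n m H V (x, y + 1) (x, y) :=
  ⟨⟨hx, hy, hx, by simp only; omega⟩, Or.inr (Or.inl ⟨rfl, rfl, h⟩)⟩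

theorem arc_u {x y : ℕ} (hx : x + 1 < n) (hy : y < m) (h : V x y) :
    nArc n m H V (x, y) (x + 1, y) :=
  ⟨⟨by simp only; omega, hy, hx, hy⟩, Or.inr (Or.inr (Or.inl ⟨rfl, rfl, h⟩))⟩

theorem arc_d {x y : ℕ} (hx : x + 1 < n) (hy : y < m) (h : ¬ V x y) :
    nArc n m H V (x + 1, y) (x, y) :=
  ⟨⟨hx, hy, by simp only; omega, hy⟩, Or.inr (Or.inr (Or.inr ⟨rfl, rfl, h⟩))⟩

theorem run_r {x y z : ℕ} (hx : x < n) (hz : z < m) (hyz : y ≤ z)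
    (h : ∀ t, y ≤ t → t < z → H x t) : Wk (nArc n m H V) (z - y) (x, y) (x, z) := by
  induction z, hyz using Nat.le_induction with
  | base => exact (Wk.nil _).cast (by omega)
  | succ z hz' ih =>
    exact ((ih (by omega) fun t h1 h2 => h t h1 (by omega)).snoc
      (arc_r hx hz (h z hz' (by omega)))).cast (by omega)

theorem run_l {x y z : ℕ} (hx : x < n) (hz : z < m) (hyz : y ≤ z)
    (h : ∀ t, y ≤ t → t < z → ¬ H x t) : Wk (nArc n m H V) (z - y) (x, z) (x, y) := by
  induction z, hyz using Nat.le_induction with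
  | base => exact (Wk.nil _).cast (by omega)
  | succ z hz' ih =>
    exact (Wk.cons (arc_l hx hz (h z hz' (by omega)))
      (ih (by omega) fun t h1 h2 => h t h1 (by omega))).cast (by omega)

theorem run_u {x z y : ℕ} (hy : y < m) (hz : z < n) (hxz : x ≤ z)
    (h : ∀ t, x ≤ t → t < z → V t y) : Wk (nArc n m H V) (z - x) (x, y) (z, y) := by
  induction z, hxz using Nat.le_induction with
  | base => exact (Wk.nil _).cast (by omega)
  | succ z hz' ih =>
    exact ((ih (by omega) fun t h1 h2 => h t h1 (by omega)).snoc
      (arc_u hz hy (h z hz' (by omega)))).cast (by omega)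

theorem run_d {x z y : ℕ} (hy : y < m) (hz : z < n) (hxz : x ≤ z)
    (h : ∀ t, x ≤ t → t < z → ¬ V t y) : Wk (nArc n m H V) (z - x) (z, y) (x, y) := by
  induction z, hxz using Nat.le_induction with
  | base => exact (Wk.nil _).cast (by omega)
  | succ z hz' ih =>
    exact (Wk.cons (arc_d hz hy (h z hz' (by omega)))
      (ih (by omega) fun t h1 h2 => h t h1 (by omega))).cast (by omega)

theorem Cv.face {S : Set (ℕ × ℕ)} (hS : Cv (nArc n m H V) S) {u v w z : ℕ × ℕ}
    (h1 : nArc n m H V u v) (h2 : nArc n m H V v w) (h3 : nArc n m H V w z)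
    (h4 : nArc n m H V z u) (hu : u ∈ S) (hv : v ∈ S) : w ∈ S ∧ z ∈ S := by
  have key : ∀ k, Wk (nArc n m H V) k v u → 3 ≤ k := by
    intro k hk
    have hp := wk_parity hk
    have hp' := wk_parity (Wk.one h1)
    have h1' : k ≠ 1 := by
      rintro rfl
      obtain ⟨t, ht, ht'⟩ := hk.inv_succ
      obtain rfl := ht'.eq_zero
      exact nArc_asymm h1 ht
    omega
  exact ⟨hS v hv u hu w 1 2 (Wk.one h2) (Wk.cons h3 (Wk.one h4)) key,
    hS v hv u hu z 2 1 (Wk.cons h2 (Wk.one h3)) (Wk.one h4) key⟩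

/-- The unit square with lower left corner `(x,y)` is a directed 4-cycle. -/
def Cyc (H V : ℕ → ℕ → Prop) (x y : ℕ) : Prop :=
  (H x y ∧ V x (y + 1) ∧ ¬ H (x + 1) y ∧ ¬ V x y) ∨
  (¬ H x y ∧ ¬ V x (y + 1) ∧ H (x + 1) y ∧ V x y)

theorem Cv.cyc {S : Set (ℕ × ℕ)} (hS : Cv (nArc n m H V) S) {x y : ℕ} (hc : Cyc H V x y)
    (hx : x + 1 < n) (hy : y + 1 < m)
    (h : ((x, y) ∈ S ∧ (x + 1, y) ∈ S) ∨ ((x, y) ∈ S ∧ (x, y + 1) ∈ S) ∨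
      ((x + 1, y) ∈ S ∧ (x + 1, y + 1) ∈ S) ∨ ((x, y + 1) ∈ S ∧ (x + 1, y + 1) ∈ S)) :
    (x, y) ∈ S ∧ (x + 1, y) ∈ S ∧ (x, y + 1) ∈ S ∧ (x + 1, y + 1) ∈ S := by
  rcases hc with ⟨c1, c2, c3, c4⟩ | ⟨c1, c2, c3, c4⟩
  · have a1 : nArc n m H V (x, y) (x, y + 1) := arc_r (by omega) hy c1
    have a2 : nArc n m H V (x, y + 1) (x + 1, y + 1) := arc_u hx hy c2
    have a3 : nArc n m H V (x + 1, y + 1) (x + 1, y) := arc_l hx hy c3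
    have a4 : nArc n m H V (x + 1, y) (x, y) := arc_d hx (by omega) c4
    rcases h with ⟨h1, h2⟩ | ⟨h1, h2⟩ | ⟨h1, h2⟩ | ⟨h1, h2⟩
    · have := hS.face a4 a1 a2 a3 h2 h1; tauto
    · have := hS.face a1 a2 a3 a4 h1 h2; tauto
    · have := hS.face a3 a4 a1 a2 h2 h1; tauto
    · have := hS.face a2 a3 a4 a1 h1 h2; tauto
  · have a1 : nArc n m H V (x, y + 1) (x, y) := arc_l (by omega) hy c1
    have a2 : nArc n m H V (x, y) (x + 1, y) := arc_u hx (by omega) c4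
    have a3 : nArc n m H V (x + 1, y) (x + 1, y + 1) := arc_r hx hy c3
    have a4 : nArc n m H V (x + 1, y + 1) (x, y + 1) := arc_d hx hy c2
    rcases h with ⟨h1, h2⟩ | ⟨h1, h2⟩ | ⟨h1, h2⟩ | ⟨h1, h2⟩
    · have := hS.face a2 a3 a4 a1 h1 h2; tauto
    · have := hS.face a1 a2 a3 a4 h2 h1; tauto
    · have := hS.face a3 a4 a1 a2 h1 h2; tauto
    · have := hS.face a4 a1 a2 a3 h2 h1; tauto

/-- Spreading a property over a rectangle of unit squares. -/
theorem spread (P : ℕ → ℕ → Prop) (r0 r1 c0 c1 : ℕ)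
    (hcl : ∀ x y, r0 ≤ x → x < r1 → c0 ≤ y → y < c1 →
      ((P x y ∧ P (x + 1) y) ∨ (P x y ∧ P x (y + 1)) ∨ (P (x + 1) y ∧ P (x + 1) (y + 1)) ∨
        (P x (y + 1) ∧ P (x + 1) (y + 1))) →
      (P x y ∧ P (x + 1) y ∧ P x (y + 1) ∧ P (x + 1) (y + 1)))
    {x0 y0 x1 y1 : ℕ} (hr : r0 < r1) (hc : c0 < c1)
    (h0 : P x0 y0) (h1 : P x1 y1)
    (hadj : (x0 = x1 ∧ y0 + 1 = y1) ∨ (y0 = y1 ∧ x0 + 1 = x1))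
    (hx0 : r0 ≤ x0) (hx1 : x1 ≤ r1) (hy0 : c0 ≤ y0) (hy1 : y1 ≤ c1) :
    ∀ x y, r0 ≤ x → x ≤ r1 → c0 ≤ y → y ≤ c1 → P x y := by
  let Q : ℕ → ℕ → Prop := fun x y => P x y ∧ P (x + 1) y ∧ P x (y + 1) ∧ P (x + 1) (y + 1)
  have hstart : ∃ a b, r0 ≤ a ∧ a < r1 ∧ c0 ≤ b ∧ b < c1 ∧ Q a b := by
    rcases hadj with ⟨rfl, rfl⟩ | ⟨rfl, rfl⟩
    · by_cases h : x0 < r1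
      · exact ⟨x0, y0, hx0, h, hy0, by omega, hcl _ _ hx0 h hy0 (by omega) (by tauto)⟩
      · obtain ⟨t, rfl⟩ : ∃ t, x0 = t + 1 := ⟨x0 - 1, by omega⟩
        exact ⟨t, y0, by omega, by omega, hy0, by omega,
          hcl _ _ (by omega) (by omega) hy0 (by omega) (by tauto)⟩
    · by_cases h : y0 < c1
      · exact ⟨x0, y0, hx0, by omega, hy0, h, hcl _ _ hx0 (by omega) hy0 h (by tauto)⟩
      · obtain ⟨t, rfl⟩ : ∃ t, y0 = t + 1 := ⟨y0 - 1, by omega⟩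
        exact ⟨x0, t, by omega, by omega, by omega, by omega,
          hcl _ _ (by omega) (by omega) (by omega) (by omega) (by tauto)⟩
  obtain ⟨a, b, ha0, ha1, hb0, hb1, hQ⟩ := hstart
  have up : ∀ d, a + d < r1 → Q (a + d) b := by
    intro d
    induction d with
    | zero => intro _; exact hQ
    | succ d ih =>
      intro hd
      have h := ih (by omega)
      exact hcl (a + (d + 1)) b (by omega) hd hb0 hb1 (Or.inr (Or.inl ⟨h.2.1, h.2.2.2⟩))
  have down : ∀ d, r0 + d ≤ a → Q (a - d) b := by
    intro d
    induction d with
    | zero => intro _; exact hQ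
    | succ d ih =>
      intro hd
      have h := ih (by omega)
      have e : a - (d + 1) + 1 = a - d := by omega
      refine hcl (a - (d + 1)) b (by omega) (by omega) hb0 hb1 ?_
      rw [e]
      exact Or.inr (Or.inr (Or.inl ⟨h.1, h.2.2.1⟩))
  have col : ∀ x, r0 ≤ x → x < r1 → Q x b := by
    intro x hx0 hx1
    by_cases h : a ≤ x
    · have := up (x - a) (by omega)
      rwa [show a + (x - a) = x by omega] at this
    · have := down (a - x) (by omega)
      rwa [show a - (a - x) = x by omega] at this
  have right : ∀ x, r0 ≤ x → x < r1 → ∀ d, b + d < c1 → Q x (b + d) := by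
    intro x hx0 hx1 d
    induction d with
    | zero => intro _; exact col x hx0 hx1
    | succ d ih =>
      intro hd
      have h := ih (by omega)
      exact hcl x (b + (d + 1)) hx0 hx1 (by omega) hd (Or.inl ⟨h.2.2.1, h.2.2.2⟩)
  have left : ∀ x, r0 ≤ x → x < r1 → ∀ d, c0 + d ≤ b → Q x (b - d) := by
    intro x hx0 hx1 d
    induction d with
    | zero => intro _; exact col x hx0 hx1
    | succ d ih =>
      intro hd
      have h := ih (by omega)
      have e : b - (d + 1) + 1 = b - d := by omega
      refine hcl x (b - (d + 1)) hx0 hx1 (by omega) (by omega) ?_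
      rw [e]
      exact Or.inr (Or.inr (Or.inr ⟨h.1, h.2.1⟩))
  have all : ∀ x y, r0 ≤ x → x < r1 → c0 ≤ y → y < c1 → Q x y := by
    intro x y hx0 hx1 hy0 hy1
    by_cases h : b ≤ y
    · have := right x hx0 hx1 (y - b) (by omega)
      rwa [show b + (y - b) = y by omega] at this
    · have := left x hx0 hx1 (b - y) (by omega)
      rwa [show b - (b - y) = y by omega] at this
  intro x y hx0 hx1 hy0 hy1
  by_cases hx : x < r1
  · by_cases hy : y < c1
    · exact (all x y hx0 hx hy0 hy).1
    · obtain ⟨t, rfl⟩ : ∃ t, y = t + 1 := ⟨y - 1, by omega⟩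
      exact (all x t hx0 hx (by omega) (by omega)).2.2.1
  · obtain ⟨s, rfl⟩ : ∃ s, x = s + 1 := ⟨x - 1, by omega⟩
    by_cases hy : y < c1
    · exact (all s y (by omega) (by omega) hy0 hy).2.1
    · obtain ⟨t, rfl⟩ : ∃ t, y = t + 1 := ⟨y - 1, by omega⟩
      exact (all s t (by omega) (by omega) (by omega) (by omega)).2.2.2

theorem Cv.spread {S : Set (ℕ × ℕ)} (hS : Cv (nArc n m H V) S) (r0 r1 c0 c1 : ℕ)
    (hcyc : ∀ x y, r0 ≤ x → x < r1 → c0 ≤ y → y < c1 → Cyc H V x y)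
    (hr : r0 < r1) (hc : c0 < c1) (hrn : r1 < n) (hcm : c1 < m) {p q : ℕ × ℕ}
    (hp : p ∈ S) (hq : q ∈ S) (hpq : nArc n m H V p q)
    (hx0 : r0 ≤ p.1) (hx1 : p.1 ≤ r1) (hy0 : c0 ≤ p.2) (hy1 : p.2 ≤ c1)
    (hx0' : r0 ≤ q.1) (hx1' : q.1 ≤ r1) (hy0' : c0 ≤ q.2) (hy1' : q.2 ≤ c1) :
    ∀ x y, r0 ≤ x → x ≤ r1 → c0 ≤ y → y ≤ c1 → (x, y) ∈ S := by
  have hcl : ∀ x y, r0 ≤ x → x < r1 → c0 ≤ y → y < c1 → _ :=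
    fun x y h1 h2 h3 h4 => hS.cyc (hcyc x y h1 h2 h3 h4) (by omega) (by omega)
  have hadj := hpq.2
  by_cases h : (p.1 = q.1 ∧ p.2 + 1 = q.2) ∨ (p.2 = q.2 ∧ p.1 + 1 = q.1)
  · exact _root_.spread (fun x y => (x, y) ∈ S) r0 r1 c0 c1 hcl hr hc hp hq h hx0 hx1' hy0 hy1'
  · exact _root_.spread (fun x y => (x, y) ∈ S) r0 r1 c0 c1 hcl hr hc hq hp (by omega)
      hx0' hx1 hy0' hy1

/-- Reachability. -/
def Rch (n m : ℕ) (H V : ℕ → ℕ → Prop) (p q : ℕ × ℕ) : Prop := ∃ k, Wk (nArc n m H V) k p q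

theorem Rch.trans {p q r : ℕ × ℕ} (h1 : Rch n m H V p q) (h2 : Rch n m H V q r) :
    Rch n m H V p r := by
  obtain ⟨i, h1⟩ := h1
  obtain ⟨j, h2⟩ := h2
  exact ⟨_, h1.trans h2⟩

theorem Rch.refl (p : ℕ × ℕ) : Rch n m H V p p := ⟨0, Wk.nil p⟩

theorem rch_arc {p q : ℕ × ℕ} (h : nArc n m H V p q) : Rch n m H V p q := ⟨1, Wk.one h⟩

theorem rch_wk {p q : ℕ × ℕ} {k : ℕ} (h : Wk (nArc n m H V) k p q) : Rch n m H V p q := ⟨k, h⟩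

theorem rch_cyc {x y : ℕ} (hc : Cyc H V x y) (hx : x + 1 < n) (hy : y + 1 < m) :
    (Rch n m H V (x, y) (x, y + 1) ∧ Rch n m H V (x, y + 1) (x, y)) ∧
    (Rch n m H V (x, y) (x + 1, y) ∧ Rch n m H V (x + 1, y) (x, y)) ∧
    (Rch n m H V (x, y) (x + 1, y + 1) ∧ Rch n m H V (x + 1, y + 1) (x, y)) := by
  rcases hc with ⟨c1, c2, c3, c4⟩ | ⟨c1, c2, c3, c4⟩
  · have a1 := rch_arc (V := V) (arc_r (x := x) (n := n) (by omega) hy c1)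
    have a2 := rch_arc (H := H) (arc_u hx hy c2)
    have a3 := rch_arc (V := V) (arc_l hx hy c3)
    have a4 := rch_arc (H := H) (arc_d (m := m) hx (by omega) c4)
    exact ⟨⟨a1, a2.trans (a3.trans a4)⟩, ⟨a1.trans (a2.trans a3), a4⟩, ⟨a1.trans a2, a3.trans a4⟩⟩
  · have a1 := rch_arc (V := V) (arc_l (x := x) (n := n) (by omega) hy c1)
    have a2 := rch_arc (H := H) (arc_u (m := m) hx (by omega) c4)
    have a3 := rch_arc (V := V) (arc_r hx hy c3)
    have a4 := rch_arc (H := H) (arc_d hx hy c2)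
    exact ⟨⟨a2.trans (a3.trans a4), a1⟩, ⟨a2, a3.trans (a4.trans a1)⟩, ⟨a2.trans a3, a4.trans a1⟩⟩

theorem rch_spread (r0 r1 c0 c1 : ℕ)
    (hcyc : ∀ x y, r0 ≤ x → x < r1 → c0 ≤ y → y < c1 → Cyc H V x y)
    (hr : r0 < r1) (hc : c0 < c1) (hrn : r1 < n) (hcm : c1 < m) :
    ∀ x y, r0 ≤ x → x ≤ r1 → c0 ≤ y → y ≤ c1 →
      Rch n m H V (r0, c0) (x, y) ∧ Rch n m H V (x, y) (r0, c0) := by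
  have h0 := (rch_cyc (n := n) (m := m) (hcyc r0 c0 le_rfl hr le_rfl hc) (by omega) (by omega)).1
  refine spread (fun x y => Rch n m H V (r0, c0) (x, y) ∧ Rch n m H V (x, y) (r0, c0))
    r0 r1 c0 c1 ?_ hr hc (x0 := r0) (y0 := c0) (x1 := r0) (y1 := c0 + 1)
    ⟨Rch.refl _, Rch.refl _⟩ h0 (Or.inl ⟨rfl, rfl⟩) le_rfl hr.le le_rfl (by omega)
  intro x y h1 h2 h3 h4 h
  obtain ⟨⟨f1, g1⟩, ⟨f2, g2⟩, ⟨f3, g3⟩⟩ := rch_cyc (hcyc x y h1 h2 h3 h4) (n := n) (m := m)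
    (by omega) (by omega)
  have hxy : Rch n m H V (r0, c0) (x, y) ∧ Rch n m H V (x, y) (r0, c0) := by
    rcases h with h | h | h | h
    · exact h.1
    · exact h.1
    · exact ⟨h.1.1.trans g2, f2.trans h.1.2⟩
    · exact ⟨h.1.1.trans g1, f1.trans h.1.2⟩
  exact ⟨hxy, ⟨hxy.1.trans f2, g2.trans hxy.2⟩, ⟨hxy.1.trans f1, g1.trans hxy.2⟩,
    ⟨hxy.1.trans f3, g3.trans hxy.2⟩⟩

theorem strong_of_hub {o : ℕ × ℕ}
    (h : ∀ x y, x < n → y < m → Rch n m H V o (x, y) ∧ Rch n m H V (x, y) o) :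
    ∀ u ∈ Box n m, ∀ v ∈ Box n m, ∃ k, Wk (nArc n m H V) k u v := by
  intro u hu v hv
  exact (h u.1 u.2 hu.1 hu.2).2.trans (h v.1 v.2 hv.1 hv.2).1

end GridTools

/-! ## Construction I -/

section ConstrI

/-- Horizontal orientation of construction I. -/
def HI (e : ℕ) (c : ℕ → ℕ) (x y : ℕ) : Prop :=
  (e + 2 ≤ y ∧ (x + y + e) % 2 = 0) ∨ (y = e + 1 ∧ x = 0) ∨
  (y ≤ e ∧ ((x = 0 ∧ (y + e) % 2 = 1) ∨ (x = 1 ∧ (y + e) % 2 = 0) ∨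
    (x = 2 ∧ y = e ∧ c 2 = e + 2)))

/-- Vertical orientation of construction I. -/
def VI (e : ℕ) (c : ℕ → ℕ) (x y : ℕ) : Prop :=
  (e + 2 ≤ y ∧ (x + y + e) % 2 = 1) ∨
  (y ≤ e + 1 ∧ ((x = 0 ∧ (y + e) % 2 = 0) ∨ (x = 1 ∧ y = e) ∨
    (2 ≤ x ∧ 2 ≤ c (x + 1) ∧ y + 1 = c (x + 1))))

/-- Hypotheses on the parameters of construction I. -/
structure PI1 (n m e : ℕ) (c : ℕ → ℕ) : Prop where
  hn : 4 ≤ n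
  hm : e + 4 ≤ m
  c0 : c 0 = e + 2
  c1 : c 1 = e + 2
  c2 : c 2 = e + 2 ∨ (c 2 = e + 1 ∧ 1 ≤ e)
  anti : ∀ x, c (x + 1) ≤ c x
  zero : ∀ x, c x = 0 ∨ 2 ≤ c x
  big : ∀ x, n ≤ x → c x = 0

/-- The convex set of construction I. -/
def CI (n m : ℕ) (c : ℕ → ℕ) : Finset (ℕ × ℕ) :=
  (Finset.range n ×ˢ Finset.range m).filter fun p => p.2 < c p.1

theorem PI1.le {n m e : ℕ} {c : ℕ → ℕ} (h : PI1 n m e c) (x : ℕ) : c x ≤ e + 2 := by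
  induction x with
  | zero => exact h.c0.le
  | succ x ih => exact (h.anti x).trans ih

theorem PI1.mem {n m e : ℕ} {c : ℕ → ℕ} (h : PI1 n m e c) {x y : ℕ} :
    (x, y) ∈ (CI n m c : Set (ℕ × ℕ)) ↔ y < c x := by
  have h1 := h.le x
  have h2 := h.big x
  have h3 := h.hm
  simp only [CI, Finset.coe_filter, Finset.mem_product, Finset.mem_range, Set.mem_ofPred_eq]
  constructor
  · exact fun h => h.2
  · intro h4
    refine ⟨⟨?_, by omega⟩, h4⟩
    by_contra h5
    have := h2 (by omega)
    omega

theorem CI_card {n m e : ℕ} {c : ℕ → ℕ} (h : PI1 n m e c) :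
    (CI n m c).card = ∑ x ∈ Finset.range n, c x := by
  unfold CI
  rw [Finset.card_filter, Finset.sum_product]
  refine Finset.sum_congr rfl fun x _ => ?_
  simp only
  rw [← Finset.card_filter]
  have : (Finset.range m).filter (fun y => y < c x) = Finset.range (c x) := by
    ext y
    have h1 := h.le x
    have h2 := h.hm
    simp only [Finset.mem_filter, Finset.mem_range]
    omega
  rw [this, Finset.card_range]

variable {n m e : ℕ} {c : ℕ → ℕ}

theorem PI1.walk (h : PI1 n m e c) : ∀ x, 2 ≤ x → x < n → ∀ y, y < c x →
    ∃ j, j ≤ x + (e + 1 - y) + 2 ∧ Wk (nArc n m (HI e c) (VI e c)) j (0, e + 1) (x, y) := by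
  obtain ⟨hn, hm, c0, c1, c2, anti, zero, big⟩ := h
  have hle : ∀ x, c x ≤ e + 2 := PI1.le ⟨hn, hm, c0, c1, c2, anti, zero, big⟩
  intro x hx
  induction x, hx using Nat.le_induction with
  | base =>
    intro _ y hy
    have w0 : Wk (nArc n m (HI e c) (VI e c)) 3 (0, e + 1) (2, e) := by
      refine Wk.cons (w := (0, e)) (arc_l (by omega) (by omega) ?_)
        (Wk.cons (w := (1, e)) (arc_u (by omega) (by omega) ?_)
        (Wk.one (arc_u (by omega) (by omega) ?_)))
      · unfold HI; omega
      · unfold VI; omega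
      · unfold VI; omega
    have hl := hle 2
    by_cases hy' : y ≤ e
    · have w1 : Wk (nArc n m (HI e c) (VI e c)) (e - y) (2, e) (2, y) := by
        refine run_l (by omega) (by omega) hy' fun t h1 h2 => ?_
        unfold HI; omega
      exact ⟨_, by omega, w0.trans w1⟩
    · obtain rfl : y = e + 1 := by omega
      have : nArc n m (HI e c) (VI e c) (2, e) (2, e + 1) := by
        refine arc_r (by omega) (by omega) ?_
        unfold HI; omega
      exact ⟨_, by omega, w0.snoc this⟩
  | succ x hx ih =>
    intro hxn y hy
    have hz := zero (x + 1)
    obtain ⟨z, hz'⟩ : ∃ z, c (x + 1) = z + 1 := ⟨c (x + 1) - 1, by omega⟩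
    have ha := anti x
    have hl := hle x
    obtain ⟨j, hj, w⟩ := ih (by omega) z (by omega)
    have w1 : nArc n m (HI e c) (VI e c) (x, z) (x + 1, z) := by
      refine arc_u (by omega) (by omega) ?_
      unfold VI; omega
    have w2 : Wk (nArc n m (HI e c) (VI e c)) (z - y) (x + 1, z) (x + 1, y) := by
      refine run_l (by omega) (by omega) (by omega) fun t h1 h2 => ?_
      unfold HI; omega
    exact ⟨_, by omega, (w.snoc w1).trans w2⟩

theorem PI1.conv (h : PI1 n m e c) :
    Cv (nArc n m (HI e c) (VI e c)) (CI n m c : Set (ℕ × ℕ)) := by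
  have hw := h.walk
  have hmem : ∀ {x y : ℕ}, (x, y) ∈ (CI n m c : Set (ℕ × ℕ)) ↔ y < c x := h.mem
  have hle := h.le
  obtain ⟨hn, hm, c0, c1, c2, anti, zero, big⟩ := h
  apply cv_of_detour
  rintro ⟨px, py⟩ hp ⟨ux, uy⟩ hu hpu ⟨qx, qy⟩ hq ⟨vx, vy⟩ hv hvq
  rw [hmem] at hp hu hq hv
  have e1 : px = 0 ∧ py = e + 1 ∧ ux = 0 ∧ uy = e + 2 := by
    obtain ⟨⟨_, _, _, _⟩, h⟩ := hpu
    simp only at h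
    have l1 := hle px
    have l2 := hle ux
    rcases h with ⟨rfl, rfl, h⟩ | ⟨rfl, rfl, h⟩ | ⟨rfl, rfl, h⟩ | ⟨rfl, rfl, h⟩
    · rcases (by omega : px = 0 ∨ px = 1 ∨ px = 2 ∨ 3 ≤ px) with rfl | rfl | rfl | _ <;>
        unfold HI at h <;> omega
    · omega
    · rcases (by omega : px = 0 ∨ px = 1 ∨ 2 ≤ px) with rfl | rfl | _ <;>
        unfold VI at h <;> (try simp only [Nat.reduceAdd, zero_add] at *) <;> omega
    · have := anti ux; omega
  obtain ⟨rfl, rfl, rfl, rfl⟩ := e1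
  have e2 : 1 ≤ qx ∧ (qx = 1 → qy = e + 1) ∧ qx < n := by
    obtain ⟨⟨_, _, _, _⟩, h⟩ := hvq
    simp only at *
    have l1 := hle qx
    rcases h with ⟨rfl, rfl, h⟩ | ⟨rfl, rfl, h⟩ | ⟨rfl, rfl, h⟩ | ⟨rfl, rfl, h⟩
    · omega
    · rcases (by omega : vx = 0 ∨ vx = 1 ∨ 2 ≤ vx) with rfl | rfl | _ <;>
        unfold HI at h <;> omega
    · have := anti vx; omega
    · rcases (by omega : qx = 0 ∨ qx = 1 ∨ 2 ≤ qx) with rfl | rfl | _ <;>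
        (try simp only [Nat.reduceAdd, zero_add] at *) <;> omega
  obtain ⟨g1, g2, g3⟩ := e2
  have l1 := hle qx
  refine ⟨fun v => man v (qx, qy) + if v = (0, e + 2) then 2 else 0, ?_, ?_⟩
  · rintro ⟨x, y⟩ ⟨x', y'⟩ hx ha
    have hmn := nArc_man ha (qx, qy)
    by_cases hxy : (x, y) = (0, e + 2)
    · beta_reduce; rw [if_pos hxy]
      simp only [Prod.mk.injEq] at hxy
      obtain ⟨rfl, rfl⟩ := hxy
      obtain ⟨⟨_, _, _, _⟩, h⟩ := ha
      simp only at h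
      have : x' = 0 ∧ y' = e + 3 := by
        rcases h with ⟨rfl, rfl, h⟩ | ⟨rfl, h1, h⟩ | ⟨rfl, rfl, h⟩ | ⟨rfl, h1, h⟩
        · omega
        · unfold HI at h; omega
        · unfold VI at h; omega
        · omega
      obtain ⟨rfl, rfl⟩ := this
      rw [if_neg (by simp)]
      simp only [man]
      omega
    · beta_reduce; rw [if_neg hxy]
      omega
  · have : ∃ j, j ≤ qx + (e + 1 - qy) + 2 ∧
        Wk (nArc n m (HI e c) (VI e c)) j (0, e + 1) (qx, qy) := by
      by_cases h1 : qx = 1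
      · obtain rfl := g2 h1
        subst h1
        refine ⟨3, by omega, Wk.cons (w := (0, e)) (arc_l (by omega) (by omega) ?_)
          (Wk.cons (w := (1, e)) (arc_u (by omega) (by omega) ?_)
          (Wk.one (arc_r (by omega) (by omega) ?_)))⟩
        · unfold HI; omega
        · unfold VI; omega
        · unfold HI; omega
      · exact hw qx (by omega) g3 qy hq
    obtain ⟨j, hj, w⟩ := this
    refine ⟨j, w, ?_⟩
    beta_reduce
    rw [if_pos rfl, if_neg (by simp; omega)]
    simp only [man]
    omega

theorem PI1.cycW : ∀ x y, 0 ≤ x → x < n - 1 → e + 2 ≤ y → y < m - 1 →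
    Cyc (HI e c) (VI e c) x y := by
  intro x y _ _ h1 _
  unfold Cyc
  by_cases hp : (x + y + e) % 2 = 0
  · left
    refine ⟨?_, ?_, ?_, ?_⟩ <;> simp only [HI, VI, true_and, and_true] <;> omega
  · right
    refine ⟨?_, ?_, ?_, ?_⟩ <;> simp only [HI, VI, true_and, and_true] <;> omega

theorem PI1.cycB : ∀ x y, 0 ≤ x → x < 1 → 0 ≤ y → y < e + 1 → Cyc (HI e c) (VI e c) x y := by
  intro x y _ h1 _ h2
  obtain rfl : x = 0 := by omega
  unfold Cyc
  by_cases hp : (y + e) % 2 = 0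
  · right
    refine ⟨?_, ?_, ?_, ?_⟩ <;> simp only [HI, VI, true_and, and_true] <;> omega
  · left
    refine ⟨?_, ?_, ?_, ?_⟩ <;> simp only [HI, VI, true_and, and_true] <;> omega

/-- The four arcs leading from `W` back to `W` through the corner of the base. -/
theorem PI1.corner (h : PI1 n m e c) :
    nArc n m (HI e c) (VI e c) (2, e + 2) (2, e + 1) ∧
    nArc n m (HI e c) (VI e c) (2, e + 1) (1, e + 1) ∧
    nArc n m (HI e c) (VI e c) (1, e + 1) (0, e + 1) ∧
    nArc n m (HI e c) (VI e c) (0, e + 1) (0, e + 2) := by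
  obtain ⟨hn, hm, c0, c1, c2, anti, zero, big⟩ := h
  refine ⟨arc_l (by omega) (by omega) ?_, arc_d (by omega) (by omega) ?_,
    arc_d (by omega) (by omega) ?_, arc_r (by omega) (by omega) ?_⟩
  · unfold HI; omega
  · unfold VI; omega
  · unfold VI; omega
  · unfold HI; omega

theorem PI1.rowLeft (h : PI1 n m e c) {x y : ℕ} (hx : 3 ≤ x) (hxn : x < n) (hy : y ≤ e + 2) :
    Wk (nArc n m (HI e c) (VI e c)) (e + 2 - y) (x, e + 2) (x, y) := by
  have := h.hm
  refine run_l hxn (by omega) hy fun t h1 h2 => ?_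
  unfold HI; omega

theorem PI1.full (h : PI1 n m e c) {S : Set (ℕ × ℕ)} (hS : Cv (nArc n m (HI e c) (VI e c)) S)
    (hW : ∀ x y, x < n → e + 2 ≤ y → y < m → (x, y) ∈ S) : ∀ p ∈ Box n m, p ∈ S := by
  obtain ⟨a1, a2, a3, a4⟩ := h.corner
  have hrl := fun {x y : ℕ} => h.rowLeft (x := x) (y := y)
  obtain ⟨hn, hm, c0, c1, c2, anti, zero, big⟩ := h
  have key : ∀ k, Wk (nArc n m (HI e c) (VI e c)) k (2, e + 2) (0, e + 2) → 4 ≤ k := by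
    intro k hk
    have := hk.potential (φ := fun v => man v (0, e + 2) + if v = (2, e + 2) then 2 else 0) ?_
    · simpa [man] using this
    · rintro ⟨x, y⟩ ⟨x', y'⟩ ha
      have hmn := nArc_man ha (0, e + 2)
      by_cases hxy : (x, y) = (2, e + 2)
      · rw [if_pos hxy]
        simp only [Prod.mk.injEq] at hxy
        obtain ⟨rfl, rfl⟩ := hxy
        obtain ⟨⟨_, _, _, _⟩, h⟩ := ha
        simp only [man] at h ⊢
        rcases h with ⟨rfl, rfl, h⟩ | ⟨rfl, h1, h⟩ | ⟨rfl, rfl, h⟩ | ⟨rfl, h1, h⟩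
        · omega
        · omega
        · omega
        · obtain rfl : x' = 1 := by omega
          exfalso
          apply h
          unfold VI; omega
      · rw [if_neg hxy]
        omega
  have s0 := hW 0 (e + 2) (by omega) le_rfl (by omega)
  have s2 := hW 2 (e + 2) (by omega) le_rfl (by omega)
  have b2 : (2, e + 1) ∈ S := hS _ s2 _ s0 _ 1 3 (Wk.one a1) (Wk.cons a2 (Wk.cons a3 (Wk.one a4))) key
  have b1 : (1, e + 1) ∈ S := hS _ s2 _ s0 _ 2 2 (Wk.cons a1 (Wk.one a2)) (Wk.cons a3 (Wk.one a4)) key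
  have b0 : (0, e + 1) ∈ S := hS _ s2 _ s0 _ 3 1 (Wk.cons a1 (Wk.cons a2 (Wk.one a3))) (Wk.one a4) key
  have base := hS.spread 0 1 0 (e + 1) PI1.cycB (by omega) (by omega) (by omega) (by omega) b1 b0 a3
    (by simp) (by simp) (by simp) (by simp) (by simp) (by simp) (by simp) (by simp)
  have row2 : ∀ y, y ≤ e + 1 → (2, y) ∈ S := by
    have dn : ∀ y, y < e → nArc n m (HI e c) (VI e c) (2, y) (1, y) := by
      intro y hy
      refine arc_d (by omega) (by omega) ?_
      unfold VI; omega
    rcases c2 with c2 | ⟨c2, he⟩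
    · have be : (2, e) ∈ S := by
        refine hS.pull (base 1 e (by omega) (by omega) (by omega) (by omega)) b2
          (Wk.one (arc_u (by omega) (by omega) ?_)) (Wk.one (arc_r (by omega) (by omega) ?_)) ?_
        · unfold VI; omega
        · unfold HI; omega
        · simp only [man]; omega
      intro y hy
      rcases (by omega : y = e + 1 ∨ y = e ∨ y < e) with rfl | rfl | hy
      · exact b2
      · exact be
      · have w : Wk (nArc n m (HI e c) (VI e c)) (e - y) (2, e) (2, y) := by
          refine run_l (by omega) (by omega) (by omega) fun t h1 h2 => ?_
          unfold HI; omega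
        refine hS.pull be (base 1 y (by omega) (by omega) (by omega) (by omega)) w
          (Wk.one (dn y hy)) ?_
        simp only [man]; omega
    · have lt : ∀ y, y < e → (2, y) ∈ S := by
        intro y hy
        have w : Wk (nArc n m (HI e c) (VI e c)) (e + 1 - y) (2, e + 1) (2, y) := by
          refine run_l (by omega) (by omega) (by omega) fun t h1 h2 => ?_
          unfold HI; omega
        refine hS.pull b2 (base 1 y (by omega) (by omega) (by omega) (by omega)) w
          (Wk.one (dn y hy)) ?_
        simp only [man]; omega
      intro y hy
      rcases (by omega : y = e + 1 ∨ y = e ∨ y < e) with rfl | rfl | hy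
      · exact b2
      · obtain ⟨f, rfl⟩ : ∃ f, y = f + 1 := ⟨y - 1, by omega⟩
        refine hS.pull b2 (lt f (by omega)) (Wk.one (arc_l (by omega) (by omega) ?_))
          (Wk.one (arc_l (by omega) (by omega) ?_)) ?_
        · unfold HI; omega
        · unfold HI; omega
        · simp only [man]; omega
      · exact lt y hy
  have rows : ∀ x, 2 ≤ x → x < n → ∀ y, y ≤ e + 1 → (x, y) ∈ S := by
    intro x hx
    induction x, hx using Nat.le_induction with
    | base => exact fun _ => row2
    | succ x hx ih =>
      intro hxn
      have ih := ih (by omega)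
      have sb := hW (x + 1) (e + 2) hxn le_rfl (by omega)
      have st : ∀ y, y ≤ e + 1 → ¬ VI e c x y → (x + 1, y) ∈ S := by
        intro y hy hv
        refine hS.pull sb (ih y hy) (hrl (by omega) hxn (by omega))
          (Wk.one (arc_d hxn (by omega) hv)) ?_
        simp only [man]; omega
      intro y hy
      by_cases hv : VI e c x y
      · obtain ⟨z, rfl⟩ : ∃ z, y = z + 1 := ⟨y - 1, by unfold VI at hv; omega⟩
        have hz : (x + 1, z) ∈ S := by
          refine st z (by omega) ?_
          unfold VI at hv ⊢; omega
        refine hS.pull sb hz (hrl (by omega) hxn (by omega)) (Wk.one (arc_l hxn (by omega) ?_)) ?_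
        · unfold HI; omega
        · simp only [man]; omega
      · exact st y hy hv
  rintro ⟨x, y⟩ ⟨hx, hy⟩
  simp only at hx hy
  by_cases hy' : e + 2 ≤ y
  · exact hW x y hx hy' hy
  · by_cases hx' : x ≤ 1
    · exact base x y (by omega) hx' (by omega) (by omega)
    · exact rows x (by omega) hx y (by omega)

theorem PI1.strong (h : PI1 n m e c) :
    ∀ u ∈ Box n m, ∀ v ∈ Box n m, ∃ k, Wk (nArc n m (HI e c) (VI e c)) k u v := by
  obtain ⟨a1, a2, a3, a4⟩ := h.corner
  have hrl := fun {x y : ℕ} => h.rowLeft (x := x) (y := y)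
  obtain ⟨hn, hm, c0, c1, c2, anti, zero, big⟩ := h
  have W := rch_spread (n := n) (m := m) 0 (n - 1) (e + 2) (m - 1)
    (PI1.cycW (n := n) (m := m) (e := e) (c := c)) (by omega) (by omega) (by omega) (by omega)
  have B0 := rch_spread (n := n) (m := m) 0 1 0 (e + 1) (PI1.cycB (e := e) (c := c))
    (by omega) (by omega) (by omega) (by omega)
  have o2 := ((W 2 (e + 2) (by omega) (by omega) (by omega) (by omega)).1.trans (rch_arc a1))
  have o1 := o2.trans (rch_arc a2)
  have B : ∀ x y, x ≤ 1 → y ≤ e + 1 → Rch n m (HI e c) (VI e c) (0, e + 2) (x, y) ∧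
      Rch n m (HI e c) (VI e c) (x, y) (0, e + 2) := by
    intro x y hx hy
    have h1 := B0 x y (by omega) hx (by omega) hy
    have h2 := B0 1 (e + 1) (by omega) le_rfl (by omega) le_rfl
    have h3 := B0 0 (e + 1) (by omega) (by omega) (by omega) le_rfl
    exact ⟨o1.trans (h2.2.trans h1.1), h1.2.trans (h3.1.trans (rch_arc a4))⟩
  have t2 : Rch n m (HI e c) (VI e c) (2, e + 1) (0, e + 2) :=
    (rch_arc a2).trans (B 1 (e + 1) (by omega) le_rfl).2
  have row2 : ∀ y, y ≤ e + 1 → Rch n m (HI e c) (VI e c) (0, e + 2) (2, y) ∧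
      Rch n m (HI e c) (VI e c) (2, y) (0, e + 2) := by
    intro y hy
    have dn : ∀ y, y < e → Rch n m (HI e c) (VI e c) (2, y) (0, e + 2) := by
      intro y hy
      refine (rch_arc (arc_d (by omega) (by omega) ?_)).trans (B 1 y le_rfl (by omega)).2
      unfold VI; omega
    rcases c2 with c2 | ⟨c2, he⟩
    · have oe : Rch n m (HI e c) (VI e c) (0, e + 2) (2, e) := by
        refine (B 1 e le_rfl (by omega)).1.trans (rch_arc (arc_u (by omega) (by omega) ?_))
        unfold VI; omega
      rcases (by omega : y = e + 1 ∨ y = e ∨ y < e) with rfl | rfl | hy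
      · exact ⟨o2, t2⟩
      · refine ⟨oe, (rch_arc (arc_r (by omega) (by omega) ?_)).trans t2⟩
        unfold HI; omega
      · refine ⟨oe.trans (rch_wk (run_l (by omega) (by omega) hy.le fun t h1 h2 => ?_)), dn y hy⟩
        unfold HI; omega
    · have oy : Rch n m (HI e c) (VI e c) (0, e + 2) (2, y) := by
        refine o2.trans (rch_wk (run_l (by omega) (by omega) hy fun t h1 h2 => ?_))
        unfold HI; omega
      refine ⟨oy, ?_⟩
      rcases (by omega : y = e + 1 ∨ y = e ∨ y < e) with rfl | rfl | hy
      · exact t2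
      · obtain ⟨f, rfl⟩ : ∃ f, y = f + 1 := ⟨y - 1, by omega⟩
        refine (rch_arc (arc_l (by omega) (by omega) ?_)).trans (dn f (by omega))
        unfold HI; omega
      · exact dn y hy
  have rows : ∀ x, 2 ≤ x → x < n → ∀ y, y ≤ e + 1 →
      Rch n m (HI e c) (VI e c) (0, e + 2) (x, y) ∧
      Rch n m (HI e c) (VI e c) (x, y) (0, e + 2) := by
    intro x hx
    induction x, hx using Nat.le_induction with
    | base => exact fun _ => row2
    | succ x hx ih =>
      intro hxn
      have ih := ih (by omega)
      have sb := (W (x + 1) (e + 2) (by omega) (by omega) le_rfl (by omega)).1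
      have st : ∀ y, y ≤ e + 1 → ¬ VI e c x y →
          Rch n m (HI e c) (VI e c) (x + 1, y) (0, e + 2) := by
        intro y hy hv
        exact (rch_arc (arc_d hxn (by omega) hv)).trans (ih y hy).2
      intro y hy
      refine ⟨sb.trans (rch_wk (hrl (by omega) hxn (by omega))), ?_⟩
      by_cases hv : VI e c x y
      · obtain ⟨z, rfl⟩ : ∃ z, y = z + 1 := ⟨y - 1, by unfold VI at hv; omega⟩
        have hz := st z (by omega) (by unfold VI at hv ⊢; omega)
        refine (rch_arc (arc_l hxn (by omega) ?_)).trans hz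
        unfold HI; omega
      · exact st y hy hv
  apply strong_of_hub (o := (0, e + 2))
  intro x y hx hy
  by_cases hy' : e + 2 ≤ y
  · exact W x y (by omega) (by omega) hy' (by omega)
  · by_cases hx' : x ≤ 1
    · exact B x y hx' (by omega)
    · exact rows x (by omega) hx y (by omega)

theorem PI1.warc (h : PI1 n m e c) {S : Set (ℕ × ℕ)} (hS : Cv (nArc n m (HI e c) (VI e c)) S)
    (hb : S ⊆ Box n m) (hnt : ∀ u ∈ S, ∃ v ∈ S, v ≠ u) :
    ∀ k x y, n + m - (x + y) ≤ k → (x, y) ∈ S → c x ≤ y →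
      ∃ p ∈ S, ∃ q ∈ S, nArc n m (HI e c) (VI e c) p q ∧ e + 2 ≤ p.2 ∧ e + 2 ≤ q.2 := by
  have hstr := h.strong
  have hle := h.le
  obtain ⟨hn, hm, c0, c1, c2, anti, zero, big⟩ := h
  intro k
  induction k with
  | zero =>
    intro x y hk hxy _
    have := hb hxy
    simp only [Box, Set.mem_ofPred_eq] at this
    omega
  | succ k ih =>
    intro x y hk hxy hc
    obtain ⟨v, hv, hne⟩ := hnt _ hxy
    by_cases h0 : x = 0 ∧ y = e + 2
    · obtain ⟨rfl, rfl⟩ := h0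
      obtain ⟨⟨x', y'⟩, hw, ha⟩ := hS.out_nbr hxy hv hne.symm (hstr _ (hb hxy) _ (hb hv))
      refine ⟨_, hxy, _, hw, ha, le_rfl, ?_⟩
      obtain ⟨⟨_, _, _, _⟩, h⟩ := ha
      simp only at h ⊢
      rcases h with ⟨rfl, rfl, h⟩ | ⟨rfl, h1, h⟩ | ⟨rfl, rfl, h⟩ | ⟨rfl, h1, h⟩
      · omega
      · exfalso; apply h; unfold HI; omega
      · omega
      · omega
    · obtain ⟨⟨x', y'⟩, hw, ha⟩ := hS.in_nbr hv hxy hne (hstr _ (hb hv) _ (hb hxy))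
      by_cases hy : e + 2 ≤ y
      · refine ⟨_, hw, _, hxy, ha, ?_, hy⟩
        obtain ⟨⟨_, _, _, _⟩, h⟩ := ha
        simp only at h ⊢
        rcases h with ⟨rfl, rfl, h⟩ | ⟨rfl, h1, h⟩ | ⟨rfl, rfl, h⟩ | ⟨rfl, h1, h⟩
        · unfold HI at h; omega
        · omega
        · omega
        · omega
      · have key : c x' ≤ y' ∧ x + y < x' + y' := by
          obtain ⟨⟨_, _, _, _⟩, h⟩ := ha
          simp only at h
          rcases h with ⟨rfl, rfl, h⟩ | ⟨rfl, rfl, h⟩ | ⟨rfl, rfl, h⟩ | ⟨rfl, rfl, h⟩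
          · rcases (by omega : x' = 0 ∨ x' = 1 ∨ x' = 2 ∨ 3 ≤ x') with rfl | rfl | rfl | _ <;>
              unfold HI at h <;> omega
          · omega
          · rcases (by omega : x' = 0 ∨ x' = 1 ∨ 2 ≤ x') with rfl | rfl | _ <;>
              unfold VI at h <;> (try simp only [Nat.reduceAdd, zero_add] at *) <;> omega
          · have := anti x; omega
        have := hb hxy
        simp only [Box, Set.mem_ofPred_eq] at this
        exact ih x' y' (by omega) hw key.1

theorem constrI (h : PI1 n m e c) :
    (∑ x ∈ Finset.range n, c x) ∈ strongConvexitySpectrum (gridGraph n m) := by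
  rw [← CI_card h]
  have hmem : ∀ {x y : ℕ}, (x, y) ∈ (CI n m c : Set (ℕ × ℕ)) ↔ y < c x := h.mem
  have hm := h.hm
  have hn := h.hn
  have c0 := h.c0
  have hcne : (CI n m c).Nonempty := ⟨(0, 0), hmem.2 (by omega)⟩
  refine spectrum_of n m (HI e c) (VI e c) (CI n m c) ?_ hcne ?_ h.strong h.conv ?_
  · intro p hp
    simp only [CI, Finset.mem_filter, Finset.mem_product, Finset.mem_range] at hp
    exact hp.1
  · refine ⟨(0, e + 2), ⟨by simp only; omega, by simp only; omega⟩, fun hc => ?_⟩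
    have := hmem.1 hc
    omega
  · intro S hb hS hSne
    by_cases hsub : S ⊆ CI n m c
    · right
      rw [← Set.ncard_coe_finset]
      exact Set.ncard_le_ncard hsub (Finset.finite_toSet _)
    by_cases hnt : ∀ u ∈ S, ∃ v ∈ S, v ≠ u
    · left
      obtain ⟨⟨x, y⟩, hxy, hxyc⟩ := Set.not_subset.1 hsub
      rw [hmem] at hxyc
      obtain ⟨p, hp, q, hq, ha, hp2, hq2⟩ := h.warc hS hb hnt _ x y le_rfl hxy (by omega)
      have bp := hb hp
      have bq := hb hq
      simp only [Box, Set.mem_ofPred_eq] at bp bq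
      have W := hS.spread 0 (n - 1) (e + 2) (m - 1) PI1.cycW (by omega) (by omega) (by omega)
        (by omega) hp hq ha (by omega) (by omega) hp2 (by omega) (by omega) (by omega) hq2 (by omega)
      exact h.full hS fun x y h1 h2 h3 => W x y (by omega) (by omega) h2 (by omega)
    · right
      push Not at hnt
      obtain ⟨u, hu, huv⟩ := hnt
      have : S ⊆ {u} := fun v hv => huv v hv
      have := Set.ncard_le_ncard this
      rw [Set.ncard_singleton] at this
      exact this.trans hcne.card_pos

end ConstrI

/-! ## Construction II (the tight square) -/

set_option linter.unusedSimpArgs false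

section ConstrII

/-- Horizontal orientation of construction II. -/
def HT (d x y : ℕ) : Prop := x = d + 1 ∨ (1 ≤ x ∧ y < d)

/-- Vertical orientation of construction II. -/
def VT (d x y : ℕ) : Prop := y = 0 ∨ (x = d ∧ y ≤ d)

variable {d : ℕ}

/-- The arcs of construction II. -/
abbrev AT (d : ℕ) : ℕ × ℕ → ℕ × ℕ → Prop := nArc (d + 2) (d + 2) (HT d) (VT d)

/-- The convex set of construction II. -/
def CT (d : ℕ) : Finset (ℕ × ℕ) := Finset.range (d + 1) ×ˢ Finset.range (d + 1)

theorem mem_CT {x y : ℕ} : (x, y) ∈ (CT d : Set (ℕ × ℕ)) ↔ x ≤ d ∧ y ≤ d := by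
  simp only [CT, Finset.coe_product, Finset.coe_range, Set.mem_prod, Set.mem_Iio]
  omega

theorem at_r {x y z : ℕ} (hx : 1 ≤ x) (hxd : x ≤ d) (h : y ≤ z) (hz : z ≤ d) :
    Wk (AT d) (z - y) (x, y) (x, z) :=
  run_r (by omega) (by omega) h fun t _ _ => by unfold HT; omega

theorem at_top {y z : ℕ} (h : y ≤ z) (hz : z ≤ d + 1) :
    Wk (AT d) (z - y) (d + 1, y) (d + 1, z) :=
  run_r (by omega) (by omega) h fun t _ _ => by unfold HT; omega

theorem at_bot {y z : ℕ} (h : y ≤ z) (hz : z ≤ d + 1) :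
    Wk (AT d) (z - y) (0, z) (0, y) :=
  run_l (by omega) (by omega) h fun t _ _ => by unfold HT; omega

theorem at_d {x y z : ℕ} (hy : 1 ≤ y) (hyd : y ≤ d) (h : x ≤ z) (hz : z ≤ d) :
    Wk (AT d) (z - x) (z, y) (x, y) :=
  run_d (by omega) (by omega) h fun t _ _ => by unfold VT; omega

theorem at_right {x z : ℕ} (h : x ≤ z) (hz : z ≤ d + 1) :
    Wk (AT d) (z - x) (z, d + 1) (x, d + 1) :=
  run_d (by omega) (by omega) h fun t _ _ => by unfold VT; omega

theorem at_left {x z : ℕ} (h : x ≤ z) (hz : z ≤ d + 1) :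
    Wk (AT d) (z - x) (x, 0) (z, 0) :=
  run_u (by omega) (by omega) h fun t _ _ => by unfold VT; omega

theorem CT_conv (hd : 2 ≤ d) : Cv (AT d) (CT d : Set (ℕ × ℕ)) := by
  apply cv_of_detour
  rintro ⟨px, py⟩ hp ⟨ux, uy⟩ hu hpu ⟨qx, qy⟩ hq ⟨vx, vy⟩ hv hvq
  rw [mem_CT] at hp hu hq hv
  have e1 : px = d ∧ ux = d + 1 ∧ uy = py := by
    obtain ⟨⟨_, _, _, _⟩, h⟩ := hpu
    simp only [HT, VT] at h
    omega
  have e2 : qy = d := by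
    obtain ⟨⟨_, _, _, _⟩, h⟩ := hvq
    simp only [HT, VT] at h
    omega
  obtain ⟨rfl, rfl, rfl⟩ := e1
  subst e2
  refine ⟨fun v => man v (qx, qy), fun x w _ h => nArc_man h _, _,
    (at_r (by omega) le_rfl hp.2 le_rfl).trans (at_d (by omega) le_rfl hq.1 le_rfl), ?_⟩
  simp only [man]
  omega

theorem AT_strong (hd : 2 ≤ d) :
    ∀ u ∈ Box (d + 2) (d + 2), ∀ v ∈ Box (d + 2) (d + 2), ∃ k, Wk (AT d) k u v := by
  apply strong_of_hub (o := (0, 0))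
  intro x y hx hy
  have z : Rch (d + 2) (d + 2) (HT d) (VT d) (0, 0) (d + 1, d + 1) :=
    (rch_wk (at_left (by omega) le_rfl)).trans (rch_wk (at_top (by omega) le_rfl))
  constructor
  · by_cases h1 : y = d + 1
    · subst h1
      exact z.trans (rch_wk (at_right (by omega) le_rfl))
    · by_cases h2 : x = 0
      · subst h2
        exact z.trans ((rch_wk (at_right (by omega) le_rfl)).trans
          (rch_wk (at_bot (by omega) le_rfl)))
      · by_cases h3 : x = d + 1
        · subst h3
          exact (rch_wk (at_left (by omega) (by omega))).trans
            (rch_wk (at_top (by omega) (by omega)))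
        · exact (rch_wk (at_left (by omega) (by omega))).trans
            (rch_wk (at_r (by omega) (by omega) (by omega) (by omega)))
  · by_cases h1 : x = d + 1
    · subst h1
      exact (rch_wk (at_top (by omega) le_rfl)).trans ((rch_wk (at_right (by omega) le_rfl)).trans
          (rch_wk (at_bot (by omega) le_rfl)))
    · by_cases h2 : x = 0
      · subst h2
        exact rch_wk (at_bot (by omega) (by omega))
      · by_cases h3 : y = d + 1
        · subst h3
          exact (rch_wk (at_right (by omega) (by omega))).trans
            (rch_wk (at_bot (by omega) (by omega)))
        · exact (rch_wk (at_r (by omega) (by omega) (by omega) le_rfl)).trans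
            ((rch_wk (at_d (by omega) le_rfl (Nat.zero_le _) (by omega))).trans
            (rch_wk (at_bot (by omega) (by omega))))

theorem AT_full (hd : 2 ≤ d) {S : Set (ℕ × ℕ)} (hS : Cv (AT d) S) (h0 : (0, 0) ∈ S)
    (hz : (d + 1, d + 1) ∈ S) : ∀ p ∈ Box (d + 2) (d + 2), p ∈ S := by
  have left : ∀ x, x ≤ d + 1 → (x, 0) ∈ S := fun x hx =>
    hS.pull h0 hz (at_left (Nat.zero_le _) hx)
      ((at_left hx le_rfl).trans (at_top (Nat.zero_le _) le_rfl)) (by simp only [man]; omega)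
  have top : ∀ y, y ≤ d + 1 → (d + 1, y) ∈ S := fun y hy =>
    hS.pull h0 hz ((at_left (Nat.zero_le _) le_rfl).trans (at_top (Nat.zero_le _) hy))
      (at_top hy le_rfl) (by simp only [man]; omega)
  have right : ∀ x, x ≤ d + 1 → (x, d + 1) ∈ S := fun x hx =>
    hS.pull hz h0 (at_right hx le_rfl)
      ((at_right (Nat.zero_le _) hx).trans (at_bot (Nat.zero_le _) le_rfl))
      (by simp only [man]; omega)
  have bot : ∀ y, y ≤ d + 1 → (0, y) ∈ S := fun y hy =>
    hS.pull hz h0 ((at_right (Nat.zero_le _) le_rfl).trans (at_bot hy le_rfl))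
      (at_bot (Nat.zero_le _) hy) (by simp only [man]; omega)
  have rowd : ∀ y, y ≤ d → (d, y) ∈ S := fun y hy =>
    hS.pull h0 hz ((at_left (Nat.zero_le _) (Nat.le_succ d)).trans
      (at_r (by omega) le_rfl (Nat.zero_le _) hy))
      (Wk.cons (w := (d + 1, y)) (arc_u (by omega) (by omega) (by unfold VT; omega))
        (at_top (by omega) le_rfl)) (by simp only [man]; omega)
  rintro ⟨x, y⟩ ⟨hx, hy⟩
  simp only at hx hy
  by_cases h1 : y = 0
  · subst h1; exact left x (by omega)
  by_cases h2 : y = d + 1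
  · subst h2; exact right x (by omega)
  by_cases h3 : x = d + 1
  · subst h3; exact top y (by omega)
  exact hS.pull (rowd y (by omega)) (bot y (by omega))
    (at_d (by omega) (by omega) (by omega) le_rfl)
    (at_d (by omega) (by omega) (Nat.zero_le _) (by omega)) (by simp only [man]; omega)

theorem constrII (hd : 2 ≤ d) :
    (d + 1) * (d + 1) ∈ strongConvexitySpectrum (gridGraph (d + 2) (d + 2)) := by
  have hcard : (CT d).card = (d + 1) * (d + 1) := by simp [CT]
  rw [← hcard]
  have hcne : (CT d).Nonempty := ⟨(0, 0), mem_CT.2 ⟨by omega, by omega⟩⟩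
  refine spectrum_of (d + 2) (d + 2) (HT d) (VT d) (CT d) ?_ hcne ?_ (AT_strong hd) (CT_conv hd) ?_
  · rintro ⟨x, y⟩ hp
    have := mem_CT.1 hp
    exact ⟨by simp only; omega, by simp only; omega⟩
  · refine ⟨(0, d + 1), ⟨by simp only; omega, by simp only; omega⟩, fun hc => ?_⟩
    have := mem_CT.1 hc
    omega
  intro S hb hS hSne
  by_cases hsub : S ⊆ CT d
  · right
    rw [← Set.ncard_coe_finset]
    exact Set.ncard_le_ncard hsub (Finset.finite_toSet _)
  by_cases hnt : ∀ u ∈ S, ∃ v ∈ S, v ≠ u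
  swap
  · right
    push Not at hnt
    obtain ⟨u, hu, huv⟩ := hnt
    have : S ⊆ {u} := fun v hv => huv v hv
    have := Set.ncard_le_ncard this
    rw [Set.ncard_singleton] at this
    exact this.trans hcne.card_pos
  have hout : ∀ x y, (x, y) ∈ S → ∃ x' y', (x', y') ∈ S ∧ AT d (x, y) (x', y') := by
    intro x y hu
    obtain ⟨v, hv, hne⟩ := hnt _ hu
    obtain ⟨⟨x', y'⟩, h1, h2⟩ := hS.out_nbr hu hv hne.symm (AT_strong hd _ (hb hu) _ (hb hv))
    exact ⟨x', y', h1, h2⟩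
  have hin : ∀ x y, (x, y) ∈ S → ∃ x' y', (x', y') ∈ S ∧ AT d (x', y') (x, y) := by
    intro x y hu
    obtain ⟨v, hv, hne⟩ := hnt _ hu
    obtain ⟨⟨x', y'⟩, h1, h2⟩ := hS.in_nbr hv hu hne (AT_strong hd _ (hb hv) _ (hb hu))
    exact ⟨x', y', h1, h2⟩
  -- chains of forced neighbours
  have goTop : ∀ k y, y + k = d + 1 → (d + 1, y) ∈ S → (d + 1, d + 1) ∈ S := by
    intro k
    induction k with
    | zero => rintro y hy h; obtain rfl : y = d + 1 := by omega
              exact h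
    | succ k ih =>
      intro y hy h
      obtain ⟨x', y', h1, ⟨⟨_, _, _, _⟩, h2⟩⟩ := hout _ _ h
      simp only [HT, VT, true_or, not_true_eq_false, and_false, false_or, or_false, true_and, and_true] at h2
      obtain ⟨rfl, rfl⟩ : x' = d + 1 ∧ y' = y + 1 := by omega
      exact ih _ (by omega) h1
  have goRight : ∀ k x, x + k = d + 1 → (x, d + 1) ∈ S → (d + 1, d + 1) ∈ S := by
    intro k
    induction k with
    | zero => rintro x hx h; obtain rfl : x = d + 1 := by omega
              exact h
    | succ k ih =>
      intro x hx h
      obtain ⟨x', y', h1, ⟨⟨_, _, _, _⟩, h2⟩⟩ := hin _ _ h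
      simp only [HT, VT, true_or, not_true_eq_false, and_false, false_or, or_false, true_and, and_true] at h2
      obtain ⟨rfl, rfl⟩ : x' = x + 1 ∧ y' = d + 1 := by omega
      exact ih _ (by omega) h1
  have hz : (d + 1, d + 1) ∈ S := by
    obtain ⟨⟨x, y⟩, hxy, hxyc⟩ := Set.not_subset.1 hsub
    rw [mem_CT] at hxyc
    have := hb hxy
    simp only [Box, Set.mem_ofPred_eq] at this
    by_cases h1 : x = d + 1
    · subst h1; exact goTop (d + 1 - y) y (by omega) hxy
    · obtain rfl : y = d + 1 := by omega
      exact goRight (d + 1 - x) x (by omega) hxy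
  have goL0 : ∀ x, x ≤ d → (x, 0) ∈ S → (0, 0) ∈ S := by
    intro x
    induction x with
    | zero => exact fun _ h => h
    | succ x ih =>
      intro hx h
      obtain ⟨x', y', h1, ⟨⟨_, _, _, _⟩, h2⟩⟩ := hin _ _ h
      simp only [HT, VT, true_or, not_true_eq_false, and_false, false_or, or_false, true_and, and_true] at h2
      obtain ⟨rfl, rfl⟩ : x' = x ∧ y' = 0 := by omega
      exact ih (by omega) h1
  have goRow : ∀ y, y < d → (d, y) ∈ S → (0, 0) ∈ S := by
    intro y
    induction y with
    | zero => exact fun _ => goL0 d le_rfl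
    | succ y ih =>
      intro hy h
      obtain ⟨x', y', h1, ⟨⟨_, _, _, _⟩, h2⟩⟩ := hin _ _ h
      simp only [HT, VT, true_or, not_true_eq_false, and_false, false_or, or_false, true_and, and_true] at h2
      obtain ⟨rfl, rfl⟩ : x' = d ∧ y' = y := by omega
      exact ih (by omega) h1
  have goTopRow : ∀ y, y < d → (d + 1, y) ∈ S → (0, 0) ∈ S := by
    intro y
    induction y with
    | zero =>
      intro hy h
      obtain ⟨x', y', h1, ⟨⟨_, _, _, _⟩, h2⟩⟩ := hin _ _ h
      simp only [HT, VT, true_or, not_true_eq_false, and_false, false_or, or_false, true_and, and_true] at h2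
      obtain ⟨rfl, rfl⟩ : x' = d ∧ y' = 0 := by omega
      exact goRow _ hy h1
    | succ y ih =>
      intro hy h
      obtain ⟨x', y', h1, ⟨⟨_, _, _, _⟩, h2⟩⟩ := hin _ _ h
      simp only [HT, VT, true_or, not_true_eq_false, and_false, false_or, or_false, true_and, and_true] at h2
      rcases (by omega : (x' = d ∧ y' = y + 1) ∨ (x' = d + 1 ∧ y' = y)) with ⟨rfl, rfl⟩ | ⟨rfl, rfl⟩
      · exact goRow _ hy h1
      · exact ih (by omega) h1
  have goB0 : ∀ y, y ≤ d → (0, y) ∈ S → (0, 0) ∈ S := by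
    intro y
    induction y with
    | zero => exact fun _ h => h
    | succ y ih =>
      intro hy h
      obtain ⟨x', y', h1, ⟨⟨_, _, _, _⟩, h2⟩⟩ := hout _ _ h
      simp only [HT, VT, true_or, not_true_eq_false, and_false, false_or, or_false, true_and, and_true] at h2
      obtain ⟨rfl, rfl⟩ : x' = 0 ∧ y' = y := by omega
      exact ih (by omega) h1
  have goCol : ∀ x, x < d → (x, d) ∈ S → (0, 0) ∈ S := by
    intro x
    induction x with
    | zero => exact fun _ => goB0 d le_rfl
    | succ x ih =>
      intro hx h
      obtain ⟨x', y', h1, ⟨⟨_, _, _, _⟩, h2⟩⟩ := hout _ _ h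
      simp only [HT, VT, true_or, not_true_eq_false, and_false, false_or, or_false, true_and, and_true] at h2
      obtain ⟨rfl, rfl⟩ : x' = x ∧ y' = d := by omega
      exact ih (by omega) h1
  have goRightCol : ∀ x, x < d → (x, d + 1) ∈ S → (0, 0) ∈ S := by
    intro x
    induction x with
    | zero =>
      intro hx h
      obtain ⟨x', y', h1, ⟨⟨_, _, _, _⟩, h2⟩⟩ := hout _ _ h
      simp only [HT, VT, true_or, not_true_eq_false, and_false, false_or, or_false, true_and, and_true] at h2
      obtain ⟨rfl, rfl⟩ : x' = 0 ∧ y' = d := by omega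
      exact goCol _ hx h1
    | succ x ih =>
      intro hx h
      obtain ⟨x', y', h1, ⟨⟨_, _, _, _⟩, h2⟩⟩ := hout _ _ h
      simp only [HT, VT, true_or, not_true_eq_false, and_false, false_or, or_false, true_and, and_true] at h2
      rcases (by omega : (x' = x + 1 ∧ y' = d) ∨ (x' = x ∧ y' = d + 1)) with ⟨rfl, rfl⟩ | ⟨rfl, rfl⟩
      · exact goCol _ hx h1
      · exact ih (by omega) h1
  by_cases h00 : (0, 0) ∈ S
  · left; exact AT_full hd hS h00 hz
  right
  have hzt : (d + 1, d) ∈ S := by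
    obtain ⟨x', y', h1, ⟨⟨_, _, _, _⟩, h2⟩⟩ := hin _ _ hz
    simp only [HT, VT, true_or, not_true_eq_false, and_false, false_or, or_false, true_and, and_true] at h2
    obtain ⟨rfl, rfl⟩ : x' = d + 1 ∧ y' = d := by omega
    exact h1
  have ht : (d, d) ∈ S := by
    obtain ⟨x', y', h1, ⟨⟨_, _, _, _⟩, h2⟩⟩ := hin _ _ hzt
    simp only [HT, VT, true_or, not_true_eq_false, and_false, false_or, or_false, true_and, and_true] at h2
    rcases (by omega : (x' = d ∧ y' = d) ∨ (x' = d + 1 ∧ y' + 1 = d)) with ⟨rfl, rfl⟩ | ⟨rfl, h3⟩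
    · exact h1
    · exact absurd (goTopRow y' (by omega) h1) h00
  have hZ : S ⊆ (({(d, d), (d + 1, d), (d, d + 1), (d + 1, d + 1)} : Finset (ℕ × ℕ)) :
      Set (ℕ × ℕ)) := by
    rintro ⟨x, y⟩ hxy
    have hbx := hb hxy
    simp only [Box, Set.mem_ofPred_eq] at hbx
    simp only [Finset.coe_insert, Finset.coe_singleton, Set.mem_insert_iff,
      Set.mem_singleton_iff, Prod.mk.injEq]
    by_contra hcon
    by_cases hC : x ≤ d ∧ y ≤ d
    · have hne : (x, y) ≠ (d, d) := by
        simp only [ne_eq, Prod.mk.injEq]; tauto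
      obtain ⟨k, hk, hmin⟩ := exists_geod (AT_strong hd _ (hb hxy) _ (hb ht))
      cases k with
      | zero => exact hne hk.eq_zero
      | succ k =>
        obtain ⟨⟨x', y'⟩, h1, h2⟩ := hk.inv_snoc
        have m1 := hS _ hxy _ ht _ k 1 h1 (Wk.one h2) hmin
        have m2 := CT_conv hd _ (mem_CT.2 hC) _ (mem_CT.2 ⟨le_rfl, le_rfl⟩) _ k 1 h1 (Wk.one h2) hmin
        rw [mem_CT] at m2
        obtain ⟨⟨_, _, _, _⟩, h2⟩ := h2
        simp only [HT, VT, true_or, not_true_eq_false, and_false, false_or, or_false, true_and, and_true] at h2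
        obtain ⟨rfl, h4⟩ : x' = d ∧ y' < d := by omega
        exact h00 (goRow _ h4 m1)
    · by_cases h1 : x = d + 1
      · subst h1
        exact h00 (goTopRow y (by omega) hxy)
      · obtain rfl : y = d + 1 := by omega
        exact h00 (goRightCol x (by omega) hxy)
  have h4 := Set.ncard_le_ncard hZ (Finset.finite_toSet _)
  rw [Set.ncard_coe_finset] at h4
  have h5 : ({(d, d), (d + 1, d), (d, d + 1), (d + 1, d + 1)} : Finset (ℕ × ℕ)).card ≤ 4 :=
    Finset.card_le_four
  rw [hcard]
  nlinarith

end ConstrII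
/-! ## Construction III (seven vertices) -/

section ConstrIII

/-- Horizontal orientation of construction III. -/
def HS (x y : ℕ) : Prop :=
  (3 ≤ y ∧ (x + y) % 2 = 0) ∨ (x = 0 ∧ (y = 1 ∨ y = 2)) ∨ (x = 1 ∧ (y = 0 ∨ y = 2)) ∨
    (x = 2 ∧ (y = 0 ∨ y = 1))

/-- Vertical orientation of construction III. -/
def VS (x y : ℕ) : Prop :=
  (3 ≤ y ∧ (x + y) % 2 = 1) ∨ (x = 0 ∧ y = 0) ∨ (x = 1 ∧ y = 1)

variable {n m : ℕ}

/-- The convex set of construction III. -/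
def CS : Finset (ℕ × ℕ) := {(0, 0), (0, 1), (1, 0), (1, 1), (1, 2), (2, 1), (2, 2)}

theorem mem_CS {x y : ℕ} : (x, y) ∈ (CS : Set (ℕ × ℕ)) ↔
    (x = 0 ∧ y ≤ 1) ∨ (x = 1 ∧ y ≤ 2) ∨ (x = 2 ∧ (y = 1 ∨ y = 2)) := by
  simp only [CS, Finset.coe_insert, Finset.coe_singleton, Set.mem_insert_iff,
      Set.mem_singleton_iff, Prod.mk.injEq]
  omega

theorem CS_arcs (hn : 4 ≤ n) (hm : 5 ≤ m) :
    nArc n m HS VS (0, 1) (0, 0) ∧ nArc n m HS VS (0, 0) (1, 0) ∧ nArc n m HS VS (1, 0) (1, 1) ∧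
    nArc n m HS VS (1, 1) (0, 1) ∧ nArc n m HS VS (1, 1) (2, 1) ∧ nArc n m HS VS (2, 1) (2, 2) ∧
    nArc n m HS VS (2, 2) (1, 2) ∧ nArc n m HS VS (1, 2) (1, 1) ∧ nArc n m HS VS (0, 1) (0, 2) ∧
    nArc n m HS VS (1, 2) (0, 2) ∧ nArc n m HS VS (0, 2) (0, 3) ∧
    nArc n m HS VS (2, 3) (2, 2) := by
  refine ⟨arc_l (by omega) (by omega) ?_, arc_u (by omega) (by omega) ?_,
    arc_r (by omega) (by omega) ?_, arc_d (by omega) (by omega) ?_,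
    arc_u (by omega) (by omega) ?_, arc_r (by omega) (by omega) ?_,
    arc_d (by omega) (by omega) ?_, arc_l (by omega) (by omega) ?_,
    arc_r (by omega) (by omega) ?_, arc_d (by omega) (by omega) ?_,
    arc_r (by omega) (by omega) ?_, arc_l (by omega) (by omega) ?_⟩ <;>
  simp [HS, VS]

theorem CS_conv (hn : 4 ≤ n) (hm : 5 ≤ m) : Cv (nArc n m HS VS) (CS : Set (ℕ × ℕ)) := by
  obtain ⟨a1, a2, a3, a4, a5, a6, a7, a8, a9, a10, a11, a12⟩ := CS_arcs hn hm
  apply cv_of_detour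
  rintro ⟨px, py⟩ hp ⟨ux, uy⟩ hu hpu ⟨qx, qy⟩ hq ⟨vx, vy⟩ hv hvq
  rw [mem_CS] at hp hu hq hv
  have e1 : (px = 0 ∧ py = 1 ∧ ux = 0 ∧ uy = 2) ∨ (px = 1 ∧ py = 2 ∧ ux = 0 ∧ uy = 2) ∨
      (px = 1 ∧ py = 2 ∧ ux = 1 ∧ uy = 3) := by
    clear hq hv hvq a1 a2 a3 a4 a5 a6 a7 a8 a9 a10 a11 a12
    obtain ⟨⟨_, _, _, _⟩, h⟩ := hpu
    simp only at h
    rcases h with ⟨rfl, rfl, h⟩ | ⟨rfl, rfl, h⟩ | ⟨rfl, rfl, h⟩ | ⟨rfl, rfl, h⟩ <;>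
    rcases hp with hp | hp | hp <;>
    simp only [HS, VS] at h <;> omega
  have e2 : (qx = 2 ∧ qy = 2) ∨ (qx = 2 ∧ qy = 1) ∨ (qx = 1 ∧ qy = 0) := by
    clear hp hu hpu e1 a1 a2 a3 a4 a5 a6 a7 a8 a9 a10 a11 a12
    obtain ⟨⟨_, _, _, _⟩, h⟩ := hvq
    simp only at h
    rcases h with ⟨rfl, rfl, h⟩ | ⟨rfl, rfl, h⟩ | ⟨rfl, rfl, h⟩ | ⟨rfl, rfl, h⟩ <;>
    rcases hq with hq | hq | hq <;>
    simp only [HS, VS] at h <;> omega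
  refine ⟨fun v => man v (qx, qy) +
    ((if v = (0, 2) then 4 else 0) + (if v = (0, 3) ∨ v = (1, 3) then 2 else 0)), ?_, ?_⟩
  · rintro ⟨x, y⟩ ⟨x', y'⟩ hx ha
    rw [mem_CS] at hx
    have hmn := nArc_man ha (qx, qy)
    obtain ⟨⟨_, _, _, _⟩, h⟩ := ha
    simp only [HS, VS] at h
    simp only [Prod.mk.injEq, man] at hmn ⊢
    by_cases h1 : x = 0 ∧ y = 2
    · obtain ⟨rfl, rfl⟩ := h1
      obtain ⟨rfl, rfl⟩ : x' = 0 ∧ y' = 3 := by omega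
      norm_num
      omega
    · rw [if_neg h1]
      by_cases h2 : (x = 0 ∧ y = 3) ∨ (x = 1 ∧ y = 3)
      · rw [if_pos h2]
        rcases h2 with ⟨rfl, rfl⟩ | ⟨rfl, rfl⟩
        · obtain ⟨rfl, rfl⟩ : x' = 1 ∧ y' = 3 := by omega
          norm_num
          omega
        · obtain ⟨rfl, rfl⟩ : x' = 1 ∧ y' = 4 := by omega
          norm_num
          omega
      · rw [if_neg h2]
        omega
  · rcases e1 with ⟨rfl, rfl, rfl, rfl⟩ | ⟨rfl, rfl, rfl, rfl⟩ | ⟨rfl, rfl, rfl, rfl⟩ <;>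
    rcases e2 with ⟨rfl, rfl⟩ | ⟨rfl, rfl⟩ | ⟨rfl, rfl⟩
    · exact ⟨_, (((Wk.one a1).snoc a2).snoc a3 |>.snoc a5).snoc a6, by simp [man]⟩
    · exact ⟨_, (((Wk.one a1).snoc a2).snoc a3 |>.snoc a5), by simp [man]⟩
    · exact ⟨_, (Wk.one a1).snoc a2, by simp [man]⟩
    · exact ⟨_, ((Wk.one a8).snoc a5).snoc a6, by simp [man]⟩
    · exact ⟨_, (Wk.one a8).snoc a5, by simp [man]⟩
    · exact ⟨_, (((Wk.one a8).snoc a4).snoc a1).snoc a2, by simp [man]⟩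
    · exact ⟨_, ((Wk.one a8).snoc a5).snoc a6, by simp [man]⟩
    · exact ⟨_, (Wk.one a8).snoc a5, by simp [man]⟩
    · exact ⟨_, (((Wk.one a8).snoc a4).snoc a1).snoc a2, by simp [man]⟩

theorem S_cycW : ∀ x y, 0 ≤ x → x < n - 1 → 3 ≤ y → y < m - 1 → Cyc HS VS x y := by
  intro x y _ _ h1 _
  unfold Cyc
  by_cases hp : (x + y) % 2 = 0
  · left
    refine ⟨?_, ?_, ?_, ?_⟩ <;> simp only [HS, VS] <;> omega
  · right
    refine ⟨?_, ?_, ?_, ?_⟩ <;> simp only [HS, VS] <;> omega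

theorem S_cyc0 : Cyc HS VS 0 0 := by
  right; refine ⟨?_, ?_, ?_, ?_⟩ <;> simp [HS, VS]

theorem S_cyc1 : Cyc HS VS 1 1 := by
  right; refine ⟨?_, ?_, ?_, ?_⟩ <;> simp [HS, VS]

theorem S_left {x y : ℕ} (hm : 5 ≤ m) (hx : 3 ≤ x) (hxn : x < n) (hy : y ≤ 3) :
    Wk (nArc n m HS VS) (3 - y) (x, 3) (x, y) :=
  run_l hxn (by omega) hy fun t h1 h2 => by unfold HS; omega

theorem S_down {x y z : ℕ} (hm : 5 ≤ m) (hz : z ≤ x) (hz2 : 2 ≤ z ∨ (1 ≤ z ∧ y = 0))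
    (hxn : x < n) (hy : y < 3) : Wk (nArc n m HS VS) (x - z) (x, y) (z, y) :=
  run_d (by omega) hxn hz fun t h1 h2 => by unfold VS; omega

theorem S_full (hn : 4 ≤ n) (hm : 5 ≤ m) {S : Set (ℕ × ℕ)} (hS : Cv (nArc n m HS VS) S)
    (hW : ∀ x y, x < n → 3 ≤ y → y < m → (x, y) ∈ S) : ∀ p ∈ Box n m, p ∈ S := by
  obtain ⟨a1, a2, a3, a4, a5, a6, a7, a8, a9, a10, a11, a12⟩ := CS_arcs hn hm
  have key : ∀ k, Wk (nArc n m HS VS) k (2, 3) (0, 3) → 4 ≤ k := by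
    intro k hk
    have := hk.potential
      (φ := fun v => man v (0, 3) + if v = (2, 3) ∨ v = (1, 3) then 2 else 0) ?_
    · simpa [man] using this
    · rintro ⟨x, y⟩ ⟨x', y'⟩ ha
      have hmn := nArc_man ha (0, 3)
      obtain ⟨⟨_, _, _, _⟩, h⟩ := ha
      simp only [HS, VS] at h
      simp only [Prod.mk.injEq, man] at hmn ⊢
      by_cases h2 : (x = 2 ∧ y = 3) ∨ (x = 1 ∧ y = 3)
      · rw [if_pos h2]
        rcases h2 with ⟨rfl, rfl⟩ | ⟨rfl, rfl⟩
        · rcases (by omega : (x' = 2 ∧ y' = 2) ∨ (x' = 1 ∧ y' = 3) ∨ (x' = 3 ∧ y' = 3)) with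
            ⟨rfl, rfl⟩ | ⟨rfl, rfl⟩ | ⟨rfl, rfl⟩ <;> norm_num
        · obtain ⟨rfl, rfl⟩ : x' = 1 ∧ y' = 4 := by omega
          norm_num
      · rw [if_neg h2]
        omega
  have s0 := hW 0 3 (by omega) le_rfl (by omega)
  have s2 := hW 2 3 (by omega) le_rfl (by omega)
  have b2 : (2, 2) ∈ S := hS _ s2 _ s0 _ 1 3 (Wk.one a12)
    (Wk.cons a7 (Wk.cons a10 (Wk.one a11))) key
  have b1 : (1, 2) ∈ S := hS _ s2 _ s0 _ 2 2 (Wk.cons a12 (Wk.one a7))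
    (Wk.cons a10 (Wk.one a11)) key
  have b0 : (0, 2) ∈ S := hS _ s2 _ s0 _ 3 1 (Wk.cons a12 (Wk.cons a7 (Wk.one a10)))
    (Wk.one a11) key
  obtain ⟨b11, b21, -, -⟩ := hS.cyc S_cyc1 (by omega) (by omega) (Or.inr (Or.inr (Or.inr ⟨b1, b2⟩)))
  have b01 : (0, 1) ∈ S := hS.pull b11 b0 (Wk.one a4) (Wk.one a9) (by simp [man])
  obtain ⟨b00, b10, -, -⟩ := hS.cyc S_cyc0 (by omega) (by omega)
    (Or.inr (Or.inr (Or.inr ⟨b01, b11⟩)))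
  simp only [zero_add, Nat.reduceAdd] at b00 b10 b21
  rintro ⟨x, y⟩ ⟨hx, hy⟩
  simp only at hx hy
  by_cases hy' : 3 ≤ y
  · exact hW x y hx hy' hy
  by_cases hx' : 3 ≤ x
  · rcases (by omega : y = 0 ∨ y = 1 ∨ y = 2) with rfl | rfl | rfl
    · exact hS.pull (hW x 3 hx le_rfl (by omega)) b10 (S_left hm hx' hx (by omega))
        (S_down hm (z := 1) (by omega) (by omega) hx (by omega)) (by simp only [man]; omega)
    · exact hS.pull (hW x 3 hx le_rfl (by omega)) b21 (S_left hm hx' hx (by omega))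
        (S_down hm (z := 2) (by omega) (by omega) hx (by omega)) (by simp only [man]; omega)
    · exact hS.pull (hW x 3 hx le_rfl (by omega)) b2 (S_left hm hx' hx (by omega))
        (S_down hm (z := 2) (by omega) (by omega) hx (by omega)) (by simp only [man]; omega)
  by_cases h20 : x = 2 ∧ y = 0
  · obtain ⟨rfl, rfl⟩ := h20
    exact hS.pull (hW 3 3 (by omega) le_rfl (by omega)) b10
      ((S_left hm le_rfl (by omega) (Nat.zero_le _)).trans
        (S_down hm (z := 2) (by omega) (by omega) (by omega) (by omega)))
      (S_down hm (z := 1) (by omega) (by omega) hx (by omega)) (by simp only [man]; omega)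
  · rcases (by omega : x = 0 ∨ x = 1 ∨ x = 2) with rfl | rfl | rfl <;>
    rcases (by omega : y = 0 ∨ y = 1 ∨ y = 2) with rfl | rfl | rfl <;>
    first | assumption | omega

theorem S_strong (hn : 4 ≤ n) (hm : 5 ≤ m) :
    ∀ u ∈ Box n m, ∀ v ∈ Box n m, ∃ k, Wk (nArc n m HS VS) k u v := by
  obtain ⟨a1, a2, a3, a4, a5, a6, a7, a8, a9, a10, a11, a12⟩ := CS_arcs hn hm
  have W := rch_spread (n := n) (m := m) 0 (n - 1) 3 (m - 1)
    (S_cycW (n := n) (m := m)) (by omega) (by omega) (by omega) (by omega)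
  apply strong_of_hub (o := (0, 3))
  have t02 : Rch n m HS VS (0, 2) (0, 3) := rch_arc a11
  have t12 := (rch_arc a10).trans t02
  have t22 := (rch_arc a7).trans t12
  have t21 := (rch_arc a6).trans t22
  have t11 := (rch_arc a5).trans t21
  have t10 := (rch_arc a3).trans t11
  have t00 := (rch_arc a2).trans t10
  have t01 := (rch_arc a1).trans t00
  have f22 := (W 2 3 (by omega) (by omega) le_rfl (by omega)).1.trans (rch_arc a12)
  have f12 := f22.trans (rch_arc a7)
  have f02 := f12.trans (rch_arc a10)
  have f11 := f12.trans (rch_arc a8)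
  have f21 := f11.trans (rch_arc a5)
  have f01 := f11.trans (rch_arc a4)
  have f00 := f01.trans (rch_arc a1)
  have f10 := f00.trans (rch_arc a2)
  intro x y hx hy
  by_cases hy' : 3 ≤ y
  · exact W x y (by omega) (by omega) hy' (by omega)
  by_cases hx' : 3 ≤ x
  · refine ⟨(W x 3 (by omega) (by omega) le_rfl (by omega)).1.trans
      (rch_wk (S_left hm hx' hx (by omega))), ?_⟩
    rcases (by omega : y = 0 ∨ y = 1 ∨ y = 2) with rfl | rfl | rfl
    · exact (rch_wk (S_down hm (z := 1) (by omega) (by omega) hx (by omega))).trans t10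
    · exact (rch_wk (S_down hm (z := 2) (by omega) (by omega) hx (by omega))).trans t21
    · exact (rch_wk (S_down hm (z := 2) (by omega) (by omega) hx (by omega))).trans t22
  by_cases h20 : x = 2 ∧ y = 0
  · obtain ⟨rfl, rfl⟩ := h20
    refine ⟨(W 3 3 (by omega) (by omega) le_rfl (by omega)).1.trans
      ((rch_wk (S_left hm le_rfl (by omega) (Nat.zero_le _))).trans
        (rch_wk (S_down hm (z := 2) (by omega) (by omega) (by omega) (by omega)))), ?_⟩
    exact (rch_wk (S_down hm (z := 1) (by omega) (by omega) hx (by omega))).trans t10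
  · rcases (by omega : x = 0 ∨ x = 1 ∨ x = 2) with rfl | rfl | rfl <;>
    rcases (by omega : y = 0 ∨ y = 1 ∨ y = 2) with rfl | rfl | rfl <;>
    first | (constructor <;> assumption) | omega

theorem S_warc (hn : 4 ≤ n) (hm : 5 ≤ m) {S : Set (ℕ × ℕ)} (hS : Cv (nArc n m HS VS) S)
    (hb : S ⊆ Box n m) (hnt : ∀ u ∈ S, ∃ v ∈ S, v ≠ u) :
    ∀ k x y, n + m - (x + y) ≤ k → (x, y) ∈ S → (x, y) ∉ (CS : Set (ℕ × ℕ)) →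
      ∃ p ∈ S, ∃ q ∈ S, nArc n m HS VS p q ∧ 3 ≤ p.2 ∧ 3 ≤ q.2 := by
  have hout : ∀ x y, (x, y) ∈ S → ∃ x' y', (x', y') ∈ S ∧ nArc n m HS VS (x, y) (x', y') := by
    intro x y hu
    obtain ⟨v, hv, hne⟩ := hnt _ hu
    obtain ⟨⟨x', y'⟩, h1, h2⟩ := hS.out_nbr hu hv hne.symm (S_strong hn hm _ (hb hu) _ (hb hv))
    exact ⟨x', y', h1, h2⟩
  have hin : ∀ x y, (x, y) ∈ S → ∃ x' y', (x', y') ∈ S ∧ nArc n m HS VS (x', y') (x, y) := by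
    intro x y hu
    obtain ⟨v, hv, hne⟩ := hnt _ hu
    obtain ⟨⟨x', y'⟩, h1, h2⟩ := hS.in_nbr hv hu hne (S_strong hn hm _ (hb hv) _ (hb hu))
    exact ⟨x', y', h1, h2⟩
  have hW : ∀ x y, (x, y) ∈ S → 3 ≤ y →
      ∃ p ∈ S, ∃ q ∈ S, nArc n m HS VS p q ∧ 3 ≤ p.2 ∧ 3 ≤ q.2 := by
    intro x y hxy hy
    by_cases h0 : x ≤ 1 ∧ y = 3
    · obtain ⟨x', y', h1, h2⟩ := hout x y hxy
      refine ⟨_, hxy, _, h1, h2, hy, ?_⟩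
      obtain ⟨⟨_, _, _, _⟩, h2⟩ := h2
      simp only [HS, VS] at h2 ⊢
      omega
    · obtain ⟨x', y', h1, h2⟩ := hin x y hxy
      refine ⟨_, h1, _, hxy, h2, ?_, hy⟩
      obtain ⟨⟨_, _, _, _⟩, h2⟩ := h2
      simp only [HS, VS] at h2 ⊢
      omega
  intro k
  induction k with
  | zero =>
    intro x y hk hxy _
    have := hb hxy
    simp only [Box, Set.mem_ofPred_eq] at this
    omega
  | succ k ih =>
    intro x y hk hxy hc
    rw [mem_CS] at hc
    have hbx := hb hxy
    simp only [Box, Set.mem_ofPred_eq] at hbx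
    by_cases hy : 3 ≤ y
    · exact hW x y hxy hy
    by_cases h02 : x = 0
    · obtain ⟨x', y', h1, h2⟩ := hout x y hxy
      refine hW x' y' h1 ?_
      obtain ⟨⟨_, _, _, _⟩, h2⟩ := h2
      simp only [HS, VS] at h2
      omega
    · obtain ⟨x', y', h1, ⟨⟨_, _, _, _⟩, h2⟩⟩ := hin x y hxy
      simp only [HS, VS] at h2
      refine ih x' y' (by omega) h1 ?_
      rw [mem_CS]
      omega

theorem constrIII (hn : 4 ≤ n) (hm : 5 ≤ m) :
    7 ∈ strongConvexitySpectrum (gridGraph n m) := by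
  have hcard : CS.card = 7 := by decide
  rw [← hcard]
  have hcne : CS.Nonempty := ⟨(0, 0), by decide⟩
  refine spectrum_of n m HS VS CS ?_ hcne ?_ (S_strong hn hm) (CS_conv hn hm) ?_
  · rintro ⟨x, y⟩ hp
    have := mem_CS.1 hp
    exact ⟨by simp only; omega, by simp only; omega⟩
  · exact ⟨(0, 2), ⟨by simp only; omega, by simp only; omega⟩, by decide⟩
  · intro S hb hS hSne
    by_cases hsub : S ⊆ CS
    · right
      rw [← Set.ncard_coe_finset]
      exact Set.ncard_le_ncard hsub (Finset.finite_toSet _)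
    by_cases hnt : ∀ u ∈ S, ∃ v ∈ S, v ≠ u
    · left
      obtain ⟨⟨x, y⟩, hxy, hxyc⟩ := Set.not_subset.1 hsub
      obtain ⟨p, hp, q, hq, ha, hp2, hq2⟩ := S_warc hn hm hS hb hnt _ x y le_rfl hxy hxyc
      have bp := hb hp
      have bq := hb hq
      simp only [Box, Set.mem_ofPred_eq] at bp bq
      have W := hS.spread 0 (n - 1) 3 (m - 1) S_cycW (by omega) (by omega) (by omega)
        (by omega) hp hq ha (by omega) (by omega) hp2 (by omega) (by omega) (by omega) hq2 (by omega)
      exact S_full hn hm hS fun x y h1 h2 h3 => W x y (by omega) (by omega) h2 (by omega)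
    · right
      push Not at hnt
      obtain ⟨u, hu, huv⟩ := hnt
      have : S ⊆ {u} := fun v hv => huv v hv
      have := Set.ncard_le_ncard this
      rw [Set.ncard_singleton] at this
      exact this.trans hcne.card_pos

end ConstrIII
/-! ## The exceptional case: seven vertices in the 4 by 4 grid -/

section ConstrIV

/-- Horizontal orientation. -/
def HE (x y : ℕ) : Prop := (x, y) ∈ [(0, 0), (1, 1), (2, 0), (3, 2)]

/-- Vertical orientation. -/
def VE (x y : ℕ) : Prop := (x, y) ∈ [(0, 1), (0, 2), (1, 2), (2, 2)]

instance : DecidableRel HE := fun x y => by unfold HE; infer_instance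
instance : DecidableRel VE := fun x y => by unfold VE; infer_instance

/-- The vertex with a given code. -/
def PE (i : ℕ) : ℕ × ℕ := (i / 4, i % 4)

/-- Arcs between codes. -/
def BE (i j : ℕ) : Prop := nArc 4 4 HE VE (PE i) (PE j)

instance : DecidableRel BE := fun i j => by unfold BE nArc; infer_instance

/-- The distance table, one hexadecimal digit per pair. -/
def dE (i j : ℕ) : ℕ :=
  (2296138060319592583454389324159997041822105866063939523860619972014296519373863297042792627592658027656091082507500490353891019116434485875336397371706745361050859730064948869557321995531912576071025173350373392524996639303363669075038819032109292490993156019262791559334058777471597731402935943198830467600 >>> (4 * (16 * i + j))) % 16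

theorem dE_self : ∀ i < 16, dE i i = 0 := by decide +kernel

theorem dE_arc : ∀ i < 16, ∀ j < 16, BE i j → ∀ v < 16, dE i v ≤ dE j v + 1 := by
  decide +kernel

theorem dE_ex : ∀ i < 16, ∀ v < 16, (i = v ∧ dE i v = 0) ∨
    ∃ j < 16, BE i j ∧ dE i v = dE j v + 1 := by
  decide +kernel

/-- The convex set. -/
def cE : List ℕ := [0, 1, 4, 5, 6, 9, 10]

/-- The other convex set. -/
def zE : List ℕ := [10, 11, 14, 15]

/-- One step of the convex hull computation. -/
def stepE (T : List ℕ) : List ℕ :=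
  (List.range 16).filter fun w =>
    T.contains w || T.any fun u => T.any fun v => dE u w + dE w v == dE u v

/-- Four steps. -/
def hullE (T : List ℕ) : List ℕ := stepE (stepE (stepE (stepE T)))

theorem cE_conv : ∀ u ∈ cE, ∀ v ∈ cE, ∀ w < 16, dE u w + dE w v = dE u v → w ∈ cE := by
  decide +kernel

/-- The alternative for the hull of an arc. -/
def AltE (i j : ℕ) : Prop :=
  (i ∈ cE ∧ j ∈ cE) ∨ hullE [i, j] = List.range 16 ∨ hullE [i, j] = zE

instance : DecidableRel AltE := fun i j => by unfold AltE; infer_instance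

theorem arc_hullE : ∀ i < 16, ∀ j < 16, BE i j → AltE i j := by
  decide +kernel

theorem z_hullE : ∀ w < 16, w ∈ zE ∨ hullE (w :: zE) = List.range 16 := by
  decide +kernel

/-- The code of a vertex. -/
def codeE (p : ℕ × ℕ) : ℕ := 4 * p.1 + p.2

theorem PE_code {p : ℕ × ℕ} (hp : p ∈ Box 4 4) : PE (codeE p) = p := by
  obtain ⟨x, y⟩ := p
  obtain ⟨h1, h2⟩ := hp
  simp only at h1 h2
  simp only [PE, codeE, Prod.mk.injEq]
  omega

theorem code_lt {p : ℕ × ℕ} (hp : p ∈ Box 4 4) : codeE p < 16 := by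
  obtain ⟨h1, h2⟩ := hp
  unfold codeE
  omega

theorem code_PE (i : ℕ) : codeE (PE i) = i := by
  simp only [PE, codeE]; omega

theorem PE_box {i : ℕ} (hi : i < 16) : PE i ∈ Box 4 4 :=
  ⟨by simp only [PE]; omega, by simp only [PE]; omega⟩

theorem wkE_ge {k v : ℕ} {p : ℕ × ℕ} (hv : v < 16) (h : Wk (nArc 4 4 HE VE) k p (PE v)) :
    dE (codeE p) v ≤ k := by
  have := h.potential (φ := fun p => dE (codeE p) v) (fun u w huw => by
    have hu : u ∈ Box 4 4 := ⟨huw.1.1, huw.1.2.1⟩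
    have hw : w ∈ Box 4 4 := ⟨huw.1.2.2.1, huw.1.2.2.2⟩
    refine dE_arc _ (code_lt hu) _ (code_lt hw) ?_ v hv
    unfold BE
    rwa [PE_code hu, PE_code hw])
  simp only [code_PE, dE_self v hv] at this
  omega

theorem wkE_ex {v : ℕ} (hv : v < 16) : ∀ k i, i < 16 → dE i v = k →
    Wk (nArc 4 4 HE VE) k (PE i) (PE v) := by
  intro k
  induction k with
  | zero =>
    intro i hi h
    rcases dE_ex i hi v hv with ⟨rfl, _⟩ | ⟨j, _, _, h2⟩
    · exact Wk.nil _
    · omega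
  | succ k ih =>
    intro i hi h
    rcases dE_ex i hi v hv with ⟨rfl, h1⟩ | ⟨j, hj, h1, h2⟩
    · omega
    · exact Wk.cons h1 (ih j hj (by omega))

theorem stepE_sound {S : Set (ℕ × ℕ)} (hS : Cv (nArc 4 4 HE VE) S) {T : List ℕ}
    (hlt : ∀ i ∈ T, i < 16) (hT : ∀ i ∈ T, PE i ∈ S) :
    (∀ i ∈ stepE T, i < 16) ∧ ∀ i ∈ stepE T, PE i ∈ S := by
  refine ⟨fun i hi => List.mem_range.1 (List.mem_filter.1 hi).1, fun w hw => ?_⟩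
  obtain ⟨hw1, hw2⟩ := List.mem_filter.1 hw
  rw [List.mem_range] at hw1
  simp only [Bool.or_eq_true, List.contains_iff_mem, List.any_eq_true, beq_iff_eq] at hw2
  rcases hw2 with h | ⟨u, hu, v, hv, h⟩
  · exact hT w h
  · refine hS _ (hT u hu) _ (hT v hv) _ _ _ (wkE_ex hw1 _ u (hlt u hu) rfl)
      (wkE_ex (hlt v hv) _ w hw1 rfl) fun k hk => ?_
    have := wkE_ge (hlt v hv) hk
    rw [code_PE] at this
    omega

theorem hullE_sound {S : Set (ℕ × ℕ)} (hS : Cv (nArc 4 4 HE VE) S) {T : List ℕ}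
    (hlt : ∀ i ∈ T, i < 16) (hT : ∀ i ∈ T, PE i ∈ S) : ∀ i ∈ hullE T, PE i ∈ S := by
  obtain ⟨h1, g1⟩ := stepE_sound hS hlt hT
  obtain ⟨h2, g2⟩ := stepE_sound hS h1 g1
  obtain ⟨h3, g3⟩ := stepE_sound hS h2 g2
  exact (stepE_sound hS h3 g3).2

theorem constrIV : 7 ∈ strongConvexitySpectrum (gridGraph 4 4) := by
  have hstr : ∀ u ∈ Box 4 4, ∀ v ∈ Box 4 4, ∃ k, Wk (nArc 4 4 HE VE) k u v := by
    intro u hu v hv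
    have := wkE_ex (code_lt hv) _ _ (code_lt hu) rfl
    rw [PE_code hu, PE_code hv] at this
    exact ⟨_, this⟩
  let C : Finset (ℕ × ℕ) := (cE.map PE).toFinset
  have hcard : C.card = 7 := by decide +kernel
  have hlt : ∀ i ∈ cE, i < 16 := by decide
  have hmem : ∀ p, p ∈ Box 4 4 → (p ∈ (C : Set (ℕ × ℕ)) ↔ codeE p ∈ cE) := by
    intro p hp
    simp only [C, List.coe_toFinset, Set.mem_ofPred_eq, List.mem_map]
    constructor
    · rintro ⟨i, hi, rfl⟩
      rwa [code_PE]
    · exact fun h => ⟨_, h, PE_code hp⟩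
  have hCb : ∀ p ∈ C, p ∈ Box 4 4 := by
    intro p hp
    simp only [C, List.mem_toFinset, List.mem_map] at hp
    obtain ⟨i, hi, rfl⟩ := hp
    exact PE_box (hlt i hi)
  rw [← hcard]
  have hcne : C.Nonempty := by rw [← Finset.card_pos, hcard]; norm_num
  refine spectrum_of 4 4 HE VE C hCb hcne ?_ hstr ?_ ?_
  · refine ⟨(0, 2), ⟨by simp, by simp⟩, ?_⟩
    decide +kernel
  · intro u hu v hv w i j h1 h2 hmin
    have bu := hCb u hu
    have bv := hCb v hv
    have bw := h1.box bu
    rw [hmem _ bu] at hu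
    rw [hmem _ bv] at hv
    rw [hmem _ bw]
    refine cE_conv _ hu _ hv _ (code_lt bw) ?_
    rw [← PE_code bw] at h1
    have e1 := wkE_ge (code_lt bw) h1
    rw [← PE_code bv] at h2
    have e2 := wkE_ge (code_lt bv) h2
    have w3 := wkE_ex (code_lt bv) _ _ (code_lt bu) rfl
    rw [PE_code bu, PE_code bv] at w3
    have e3 := hmin _ w3
    have w4 := (wkE_ex (code_lt bw) _ _ (code_lt bu) rfl).trans
      (wkE_ex (code_lt bv) _ _ (code_lt bw) rfl)
    have e4 := wkE_ge (code_lt bv) w4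
    rw [code_PE] at e4
    omega
  · intro S hb hS hSne
    by_cases hsub : S ⊆ C
    · right
      rw [← Set.ncard_coe_finset]
      exact Set.ncard_le_ncard hsub (Finset.finite_toSet _)
    by_cases hnt : ∃ u ∈ S, u ∉ (C : Set (ℕ × ℕ)) ∧ ∃ v ∈ S, v ≠ u
    · obtain ⟨u, hu, huC, v, hv, hne⟩ := hnt
      obtain ⟨w, hw, ha⟩ := hS.out_nbr hu hv hne.symm (hstr _ (hb hu) _ (hb hv))
      have bu := hb hu
      have bw := hb hw
      rw [hmem _ bu] at huC
      have hB : BE (codeE u) (codeE w) := by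
        unfold BE
        rwa [PE_code bu, PE_code bw]
      have hs := hullE_sound hS (T := [codeE u, codeE w])
        (by simp [code_lt bu, code_lt bw]) (by simp [PE_code bu, PE_code bw, hu, hw])
      have full : (∀ i ∈ List.range 16, PE i ∈ S) → ∀ p ∈ Box 4 4, p ∈ S := by
        intro h p hp
        have := h _ (List.mem_range.2 (code_lt hp))
        rwa [PE_code hp] at this
      rcases arc_hullE _ (code_lt bu) _ (code_lt bw) hB with h | h | h
      · exact absurd h.1 huC
      · left
        rw [h] at hs
        exact full hs
      · rw [h] at hs
        have hzlt : ∀ i ∈ zE, i < 16 := by decide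
        by_cases hZ : ∃ p ∈ S, codeE p ∉ zE
        · left
          obtain ⟨p, hp, hpz⟩ := hZ
          have bp := hb hp
          have hs' := hullE_sound hS (T := codeE p :: zE)
            (by simpa [code_lt bp] using hzlt) (by simpa [PE_code bp, hp] using hs)
          rw [(z_hullE _ (code_lt bp)).resolve_left hpz] at hs'
          exact full hs'
        · right
          push Not at hZ
          have : S ⊆ ((zE.map PE).toFinset : Set (ℕ × ℕ)) := by
            intro p hp
            simp only [List.coe_toFinset, Set.mem_ofPred_eq, List.mem_map]
            exact ⟨_, hZ p hp, PE_code (hb hp)⟩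
          have := Set.ncard_le_ncard this (Finset.finite_toSet _)
          rw [Set.ncard_coe_finset] at this
          have h4 : (zE.map PE).toFinset.card ≤ 7 := by decide +kernel
          rw [hcard]
          exact this.trans h4
    · right
      push Not at hnt
      obtain ⟨u, hu, huC⟩ := Set.not_subset.1 hsub
      have huv := hnt u hu huC
      have : S ⊆ {u} := fun v hv => huv v hv
      have := Set.ncard_le_ncard this
      rw [Set.ncard_singleton] at this
      exact this.trans hcne.card_pos

end ConstrIV
/-! ## Staircase shapes for construction I -/

section Final

/-- Row lengths of a staircase: `p` rows of length `b`, then `u`, then `v`. -/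
def cst (p b u v x : ℕ) : ℕ := if x < p then b else if x = p then u else if x = p + 1 then v else 0

theorem cst_sum (p b u v N : ℕ) : ∑ x ∈ Finset.range N, cst p b u v x =
    if N ≤ p then N * b else if N = p + 1 then p * b + u else p * b + u + v := by
  induction N with
  | zero => simp
  | succ N ih =>
    rw [Finset.sum_range_succ, ih]
    rcases (by omega : N + 1 ≤ p ∨ N = p ∨ N = p + 1 ∨ p + 2 ≤ N) with h | rfl | rfl | h
    · rw [if_pos (by omega), if_pos h, cst, if_pos (by omega)]
      ring
    · simp [cst]
    · simp [cst]
    · rw [if_neg (by omega), if_neg (by omega), if_neg (by omega), if_neg (by omega), cst,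
        if_neg (by omega), if_neg (by omega), if_neg (by omega)]
      rfl

theorem stair {n m b p u v : ℕ} (hn : 4 ≤ n) (hb : b + 2 ≤ m) (hb2 : 2 ≤ b)
    (hp : 3 ≤ p ∨ (p = 2 ∧ u + 1 = b ∧ 3 ≤ b)) (hub : u ≤ b) (hvu : v ≤ u)
    (hu : u = 0 ∨ 2 ≤ u) (hv : v = 0 ∨ 2 ≤ v) (hpn : p ≤ n) (hun : u ≠ 0 → p < n)
    (hvn : v ≠ 0 → p + 1 < n) :
    p * b + u + v ∈ strongConvexitySpectrum (gridGraph n m) := by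
  obtain ⟨e, rfl⟩ : ∃ e, b = e + 2 := ⟨b - 2, by omega⟩
  have h : PI1 n m e (cst p (e + 2) u v) := by
    refine ⟨hn, hb, ?_, ?_, ?_, ?_, ?_, ?_⟩
    · rw [cst, if_pos (by omega)]
    · rw [cst, if_pos (by omega)]
    · unfold cst; split_ifs <;> omega
    · intro x; unfold cst; split_ifs <;> omega
    · intro x; unfold cst; split_ifs <;> omega
    · intro x hx; unfold cst; split_ifs <;> omega
  have := constrI h
  rw [cst_sum] at this
  convert this using 1
  split_ifs with h1 h2
  · obtain rfl : n = p := by omega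
    omega
  · omega
  · rfl

theorem mid {n m s : ℕ} (hn : 4 ≤ n) (hm : 4 ≤ m) (h8 : 8 ≤ s) (hnm : n ≤ m)
    (hs : s ≤ n * (m - 2)) : s ∈ strongConvexitySpectrum (gridGraph n m) := by
  by_cases h : s = 8
  · subst h
    exact stair (n := n) (m := m) (b := 2) (p := 4) (u := 0) (v := 0) hn (by omega) le_rfl
      (by omega) (by omega) le_rfl (by omega) (by omega) hn (by omega) (by omega)
  have hm5 : 5 ≤ m := by
    by_contra hc
    obtain rfl : m = 4 := by omega
    obtain rfl : n = 4 := by omega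
    omega
  obtain ⟨b, hb3, hbm, h3b, hnb⟩ : ∃ b, 3 ≤ b ∧ b + 2 ≤ m ∧ 3 * b ≤ s ∧ s ≤ n * b := by
    by_cases hc : 3 * (m - 2) ≤ s
    · exact ⟨m - 2, by omega, by omega, hc, hs⟩
    · refine ⟨s / 3, by omega, by omega, by omega, ?_⟩
      have : 4 * (s / 3) ≤ n * (s / 3) := Nat.mul_le_mul_right _ hn
      omega
  obtain ⟨q, r, hr, rfl⟩ : ∃ q r, r < b ∧ s = q * b + r :=
    ⟨s / b, s % b, Nat.mod_lt _ (by omega), by rw [Nat.mul_comm]; exact (Nat.div_add_mod s b).symm⟩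
  have hq : 3 ≤ q := by
    by_contra hc
    have : q * b ≤ 2 * b := Nat.mul_le_mul_right _ (by omega)
    omega
  have hqn : q ≤ n := by
    by_contra hc
    have : (n + 1) * b ≤ q * b := Nat.mul_le_mul_right _ (by omega)
    rw [Nat.succ_mul] at this
    omega
  have hqn' : r ≠ 0 → q < n := by
    intro h0
    by_contra hc
    obtain rfl : q = n := by omega
    omega
  by_cases h1 : r = 1
  · subst h1
    obtain ⟨p, rfl⟩ : ∃ p, q = p + 1 := ⟨q - 1, by omega⟩
    have := stair (n := n) (m := m) (b := b) (p := p) (u := b - 1) (v := 2) hn hbm (by omega)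
      (by omega) (by omega) (by omega) (by omega) (by omega) (by omega) (by omega) (by omega)
    convert this using 1
    rw [Nat.succ_mul]
    omega
  · exact stair (n := n) (m := m) (b := b) (p := q) (u := r) (v := 0) hn hbm (by omega)
      (by omega) (by omega) (by omega) (by omega) (by omega) hqn hqn' (by omega)

theorem core {n m s : ℕ} (hn : 4 ≤ n) (hm : 4 ≤ m) (h7 : 7 ≤ s) (hs : s ≤ (n - 1) * (m - 1))
    (hnm : n ≤ m) : s ∈ strongConvexitySpectrum (gridGraph n m) := by
  by_cases h : s = 7
  · subst h
    by_cases h5 : 5 ≤ m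
    · exact constrIII hn h5
    · obtain rfl : m = 4 := by omega
      obtain rfl : n = 4 := by omega
      exact constrIV
  by_cases h2 : s ≤ n * (m - 2)
  · exact mid hn hm (by omega) hnm h2
  obtain ⟨d, rfl⟩ : ∃ d, n = d + 2 := ⟨n - 2, by omega⟩
  obtain ⟨f, rfl⟩ : ∃ f, m = f + 2 := ⟨m - 2, by omega⟩
  simp only [Nat.add_sub_cancel, show d + 2 - 1 = d + 1 by omega,
    show f + 2 - 1 = f + 1 by omega] at hs h2
  have e1 : (d + 1) * (f + 1) = d * f + d + f + 1 := by ring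
  have e2 : (d + 2) * f = d * f + 2 * f := by ring
  obtain rfl : f = d := by omega
  obtain rfl : s = (f + 1) * (f + 1) := by omega
  exact constrII (by omega)

theorem wk_equiv {α β : Type*} (σ : β ≃ α) (A : α → α → Prop) {k : ℕ} {u v : β} :
    Wk (fun x y => A (σ x) (σ y)) k u v ↔ Wk A k (σ u) (σ v) := by
  induction k generalizing u with
  | zero =>
    constructor
    · intro h; rw [h.eq_zero]; exact Wk.nil _
    · intro h; rw [σ.injective h.eq_zero]; exact Wk.nil _
  | succ k ih =>
    constructor
    · intro h
      obtain ⟨w, h1, h2⟩ := h.inv_succ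
      exact Wk.cons h1 (ih.1 h2)
    · intro h
      obtain ⟨w, h1, h2⟩ := h.inv_succ
      refine Wk.cons (w := σ.symm w) ?_ (ih.2 ?_)
      · simpa using h1
      · simpa using h2

theorem convset_sub {α β : Type*} (σ : β ≃ α) (A : α → α → Prop) :
    {k | ∃ C : Set α, DConvex A C ∧ C ≠ Set.univ ∧ C.ncard = k} ⊆
    {k | ∃ C : Set β, DConvex (fun x y => A (σ x) (σ y)) C ∧ C ≠ Set.univ ∧ C.ncard = k} := by
  rintro k ⟨C, hC, hne, hk⟩
  rw [dconvex_iff] at hC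
  obtain ⟨⟨c, hc⟩, hC⟩ := hC
  refine ⟨σ ⁻¹' C, ?_, ?_, ?_⟩
  · rw [dconvex_iff]
    refine ⟨⟨σ.symm c, by simpa using hc⟩, ?_⟩
    intro u hu v hv w i j h1 h2 hmin
    exact hC _ hu _ hv _ i j ((wk_equiv σ A).1 h1) ((wk_equiv σ A).1 h2)
      fun k hk => hmin k ((wk_equiv σ A).2 hk)
  · intro h
    apply hne
    ext x
    simp only [Set.mem_univ, iff_true]
    have : σ.symm x ∈ σ ⁻¹' C := by rw [h]; trivial
    simpa using this
  · rw [← hk, ← Set.ncard_image_of_injective _ σ.injective, Set.image_preimage_eq _ σ.surjective]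

theorem spectrum_swap {n m k : ℕ} (h : k ∈ strongConvexitySpectrum (gridGraph n m)) :
    k ∈ strongConvexitySpectrum (gridGraph m n) := by
  obtain ⟨A, ⟨o1, o2, o3⟩, hs, hk⟩ := h
  let σ : Fin m × Fin n ≃ Fin n × Fin m := Equiv.prodComm _ _
  have hadj : ∀ x y, (gridGraph n m).Adj (σ x) (σ y) ↔ (gridGraph m n).Adj x y := by
    intro x y
    simp only [gridGraph, SimpleGraph.boxProd_adj, σ, Equiv.prodComm_apply, Prod.fst_swap,
      Prod.snd_swap]
    tauto
  refine ⟨fun x y => A (σ x) (σ y), ⟨?_, ?_, ?_⟩, ?_, ?_⟩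
  · exact fun x y h => (hadj x y).1 (o1 _ _ h)
  · exact fun x y h => o2 _ _ ((hadj x y).2 h)
  · exact fun x y h => o3 _ _ h
  · intro u v
    obtain ⟨k, f, hf⟩ := hs (σ u) (σ v)
    obtain ⟨g, hg⟩ := wk_iff.1 ((wk_equiv σ A).2 (wk_iff.2 ⟨f, hf⟩))
    exact ⟨k, g, hg⟩
  · rw [← hk]
    unfold convexityNumber
    congr 1
    refine Set.Subset.antisymm ?_ (convset_sub σ A)
    have := convset_sub σ.symm (fun x y => A (σ x) (σ y))
    simpa only [Equiv.apply_symm_apply] using this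

end Final


/-- Realizable values `ab - (k + l)` in the strong convexity spectrum of `P_n □ P_m`. -/
theorem ab_sub_kl_mem_strongConvexitySpectrum_grid (n m : ℕ) (hn : 4 ≤ n) (hm : 4 ≤ m)
    (a b k l : ℕ) (ha3 : 3 ≤ a) (hb3 : 3 ≤ b)
    (hk : k ≤ a - 2) (ha : a - 2 ≤ n - 3) (hl : l ≤ b - 2) (hb : b - 2 ≤ m - 3) :
    a * b - (k + l) ∈ strongConvexitySpectrum (gridGraph n m) := by
  have hab : a * b ≤ (n - 1) * (m - 1) := Nat.mul_le_mul (by omega) (by omega)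
  have h7 : 7 ≤ a * b - (k + l) := by
    obtain ⟨a', rfl⟩ := Nat.exists_eq_add_of_le ha3
    obtain ⟨b', rfl⟩ := Nat.exists_eq_add_of_le hb3
    have h : (3 + a') * (3 + b') = a' * b' + 3 * a' + 3 * b' + 9 := by ring
    rw [h]
    omega
  have hs : a * b - (k + l) ≤ (n - 1) * (m - 1) := (Nat.sub_le _ _).trans hab
  rcases le_total n m with h | h
  · exact core hn hm h7 hs h
  · exact spectrum_swap (core hm hn h7 (by rw [Nat.mul_comm (m - 1)]; exact hs) h)
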